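/- arXiv:2204.07785 — 3 statements merged into one kernel-verified Lean document; each statement's English description precedes it below -/
import Mathlib

section
/- Fix real u, v, w with |u|, |v|, |w| sufficiently small, and for 0 < z < 1 let Φ_0(z) = ∑_{k ≥ n+s, n ≥ s ≥ 1} G_0(k,n,s;z) u^{k−n−s} v^{n−s} w^{s−1}. Then Φ_0 satisfies the differential equation z(1−z²)Φ_0''(z) + [(1−u)(1−z²) − vz²]Φ_0'(z) + (uv−w)zΦ_0(z) = 1 on (0,1). -/
open scoped BigOperators

/-- The multiple `t`-value of an index `K = (k₁, …, kₙ)` (a list of positive integers):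
`t(K) = ∑_{m₁ > ⋯ > mₙ > 0, all mᵢ odd} 1 / (m₁^{k₁} ⋯ mₙ^{kₙ})`. -/
noncomputable def multT (K : List ℕ) : ℝ :=
  ∑' m : Fin K.length → ℕ,
    if (∀ i, Odd (m i)) ∧ (∀ i j : Fin K.length, i < j → m j < m i) then
      ∏ i, ((m i : ℝ) ^ K.get i)⁻¹
    else 0

/-- The multiple `t`-star value of an index `K = (k₁, …, kₙ)`:
`t*(K) = ∑_{m₁ ≥ ⋯ ≥ mₙ > 0, all mᵢ odd} 1 / (m₁^{k₁} ⋯ mₙ^{kₙ})`. -/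
noncomputable def multTStar (K : List ℕ) : ℝ :=
  ∑' m : Fin K.length → ℕ,
    if (∀ i, Odd (m i)) ∧ (∀ i j : Fin K.length, i < j → m j ≤ m i) then
      ∏ i, ((m i : ℝ) ^ K.get i)⁻¹
    else 0

/-- An index (list of positive integers) is admissible if its first entry is `> 1`. -/
def Admissible (K : List ℕ) : Prop := (∀ i ∈ K, 1 ≤ i) ∧ 2 ≤ K.headI

instance : DecidablePred Admissible := fun K =>
  inferInstanceAs (Decidable ((∀ i ∈ K, 1 ≤ i) ∧ 2 ≤ K.headI))

/-- `G0h k n s` is the sum of multiple `t`-values over all admissible indices of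
weight `k`, depth `n` and height `s`. -/
noncomputable def G0h (k n s : ℕ) : ℝ :=
  ∑' K : List ℕ,
    if Admissible K ∧ K.sum = k ∧ K.length = n ∧
        K.countP (fun i => decide (2 ≤ i)) = s then
      multT K
    else 0

/-- `G0hStar k n s` is the sum of multiple `t`-star values over all admissible indices of
weight `k`, depth `n` and height `s`. -/
noncomputable def G0hStar (k n s : ℕ) : ℝ :=
  ∑' K : List ℕ,
    if Admissible K ∧ K.sum = k ∧ K.length = n ∧
        K.countP (fun i => decide (2 ≤ i)) = s then
      multTStar K
    else 0

/-- `G0d k n` is the sum of multiple `t`-values over all admissible indices of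
weight `k` and depth `n`. -/
noncomputable def G0d (k n : ℕ) : ℝ :=
  ∑' K : List ℕ,
    if Admissible K ∧ K.sum = k ∧ K.length = n then multT K else 0

/-- `G0dStar k n` is the sum of multiple `t`-star values over all admissible indices of
weight `k` and depth `n`. -/
noncomputable def G0dStar (k n : ℕ) : ℝ :=
  ∑' K : List ℕ,
    if Admissible K ∧ K.sum = k ∧ K.length = n then multTStar K else 0

/-- The single `t`-value `t(n) = ∑_{m odd, m > 0} 1 / m^n`. -/
noncomputable def tval (n : ℕ) : ℝ := ∑' m : ℕ, 1 / (2 * (m : ℝ) + 1) ^ n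

/-- The ascending Pochhammer symbol `(a)ₙ = a (a+1) ⋯ (a+n-1)`. -/
noncomputable def poch (a : ℂ) (n : ℕ) : ℂ := ∏ i ∈ Finset.range n, (a + i)

/-- The generalized hypergeometric function `₃F₂(a, b, c; d, e; z)`. -/
noncomputable def hyp3F2 (a b c d e z : ℂ) : ℂ :=
  ∑' n : ℕ, poch a n * poch b n * poch c n /
      ((n.factorial : ℂ) * poch d n * poch e n) * z ^ n

/-- The generalized hypergeometric function with upper parameters `as` and lower
parameters `bs`. -/
noncomputable def hypF (as bs : List ℂ) (z : ℂ) : ℂ :=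
  ∑' n : ℕ, (as.map fun a => poch a n).prod /
      ((n.factorial : ℂ) * (bs.map fun b => poch b n).prod) * z ^ n

/-- The one-variable multiple polylogarithm
`L_K(z) = ∑_{m₁ > ⋯ > mₙ > 0, all mᵢ odd} z^{m₁} / (m₁^{k₁} ⋯ mₙ^{kₙ})`. -/
noncomputable def Lt (K : List ℕ) (z : ℝ) : ℝ :=
  ∑' m : Fin K.length → ℕ,
    if h : (∀ i, Odd (m i)) ∧ (∀ i j : Fin K.length, i < j → m j < m i) ∧
        0 < K.length then
      z ^ (m ⟨0, h.2.2⟩) * ∏ i, ((m i : ℝ) ^ K.get i)⁻¹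
    else 0

/-- The one-variable star multiple polylogarithm
`L*_K(z) = ∑_{m₁ ≥ ⋯ ≥ mₙ > 0, all mᵢ odd} z^{m₁} / (m₁^{k₁} ⋯ mₙ^{kₙ})`. -/
noncomputable def LtStar (K : List ℕ) (z : ℝ) : ℝ :=
  ∑' m : Fin K.length → ℕ,
    if h : (∀ i, Odd (m i)) ∧ (∀ i j : Fin K.length, i < j → m j ≤ m i) ∧
        0 < K.length then
      z ^ (m ⟨0, h.2.2⟩) * ∏ i, ((m i : ℝ) ^ K.get i)⁻¹
    else 0

/-- `G0hz k n s z` is the sum of `L_K(z)` over all admissible indices `K` of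
weight `k`, depth `n` and height `s`. -/
noncomputable def G0hz (k n s : ℕ) (z : ℝ) : ℝ :=
  ∑' K : List ℕ,
    if Admissible K ∧ K.sum = k ∧ K.length = n ∧
        K.countP (fun i => decide (2 ≤ i)) = s then
      Lt K z
    else 0

/-- `G0hzStar k n s z` is the sum of `L*_K(z)` over all admissible indices `K` of
weight `k`, depth `n` and height `s`. -/
noncomputable def G0hzStar (k n s : ℕ) (z : ℝ) : ℝ :=
  ∑' K : List ℕ,
    if Admissible K ∧ K.sum = k ∧ K.length = n ∧
        K.countP (fun i => decide (2 ≤ i)) = s then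
      LtStar K z
    else 0


namespace PhiODE

noncomputable def u1 (u : ℝ) (k : ℕ) : ℝ := if 2 ≤ k then u ^ (k - 2) else 0
noncomputable def wt (u v w : ℝ) (k : ℕ) : ℝ := (if k = 1 then v else 0) + w * u1 u k
noncomputable def Wl (u v w : ℝ) (K : List ℕ) : ℝ := (K.map (wt u v w)).prod
noncomputable def B (u : ℝ) (m : ℕ) : ℝ := 1 / ((m : ℝ) * (m - u))
noncomputable def aa (u v w : ℝ) (m : ℕ) : ℝ := v * (m : ℝ)⁻¹ + w * B u m
noncomputable def S (u v w : ℝ) : ℕ → ℝ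
  | 0 => 1
  | M + 1 => S u v w M + (if Odd M then aa u v w M * S u v w M else 0)
noncomputable def T : List ℕ → ℕ → ℝ
  | [], _ => 1
  | k :: K, M => ∑ j ∈ Finset.range M, if Odd j then ((j : ℝ) ^ k)⁻¹ * T K j else 0
noncomputable def cc (u v w : ℝ) (m : ℕ) : ℝ := if Odd m then B u m * S u v w m else 0

lemma hs_congr {α : Type*} {f g : α → ℝ} {a b : ℝ} (h : HasSum f a) (hf : ∀ x, g x = f x)
    (ha : b = a) : HasSum g b := by
  obtain rfl : g = f := funext hf
  rwa [ha]

lemma hasSum_prod_nonneg {α β : Type*} {f : α × β → ℝ} {g : α → ℝ} {a : ℝ} (h0 : ∀ x, 0 ≤ f x)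
    (h1 : ∀ x, HasSum (fun y => f (x, y)) (g x)) (h2 : HasSum g a) : HasSum f a := by
  have hs : Summable f := by
    rw [summable_prod_of_nonneg (fun x => h0 x)]
    refine ⟨fun x => (h1 x).summable, ?_⟩
    simp_rw [fun x => (h1 x).tsum_eq]
    exact h2.summable
  have := hs.hasSum.prod_fiberwise h1
  rw [← this.unique h2]
  exact hs.hasSum

lemma hasSum_u1 {u : ℝ} (hu : |u| < 1) {m : ℕ} (hm : 1 ≤ m) :
    HasSum (fun k => u1 u k * ((m : ℝ) ^ k)⁻¹) (B u m) := by
  have hm' : (1 : ℝ) ≤ m := by exact_mod_cast hm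
  have hum : u < m := lt_of_lt_of_le (abs_lt.1 hu).2 hm'
  rw [← hasSum_nat_add_iff' 2]
  have h1 : |u / m| < 1 := by
    rw [abs_div, abs_of_pos (by linarith : (0 : ℝ) < m), div_lt_one (by linarith)]
    linarith
  have := (hasSum_geometric_of_abs_lt_one h1).mul_left (((m : ℝ) ^ 2)⁻¹)
  refine hs_congr this ?_ ?_
  · intro k
    simp only [u1, le_add_iff_nonneg_left, zero_le, if_true, Nat.add_sub_cancel, div_pow, pow_add]
    field_simp
  · simp [Finset.sum_range_succ, u1, B]
    have : (m : ℝ) - u ≠ 0 := by linarith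
    have : (m : ℝ) ≠ 0 := by linarith
    field_simp

lemma hasSum_wt {u v w : ℝ} (hu : |u| < 1) {m : ℕ} (hm : 1 ≤ m) :
    HasSum (fun k => wt u v w k * ((m : ℝ) ^ k)⁻¹) (aa u v w m) := by
  have h1 : HasSum (fun k => (if k = 1 then v * (m : ℝ)⁻¹ else 0)) (v * (m : ℝ)⁻¹) :=
    hasSum_ite_eq 1 _
  have := h1.add ((hasSum_u1 hu hm).mul_left w)
  refine hs_congr this ?_ rfl
  intro k
  by_cases hk : k = 1
  · subst hk; simp [wt, add_mul, mul_assoc]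
  · simp [wt, hk, mul_assoc]

lemma hasSum_mul' {α β : Type*} {f : α → ℝ} {g : β → ℝ} {a b : ℝ} (hf : HasSum f a)
    (hg : HasSum g b) : HasSum (fun x : α × β => f x.1 * g x.2) (a * b) :=
  hf.mul hg (summable_mul_of_summable_norm hf.summable.norm hg.summable.norm)

lemma hasSum_cons {F : List ℕ → ℝ} {a : ℝ} (h0 : F [] = 0)
    (h : HasSum (fun x : ℕ × List ℕ => F (x.1 :: x.2)) a) : HasSum F a := by
  have hi : Function.Injective (fun x : ℕ × List ℕ => x.1 :: x.2) := by
    rintro ⟨a, b⟩ ⟨c, d⟩ h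
    simpa using h
  rw [← hi.hasSum_iff]
  · exact h
  · intro K hK
    cases K with
    | nil => exact h0
    | cons k K => exact absurd ⟨(k, K), rfl⟩ hK

lemma hasSum_S {u v w : ℝ} (hu : |u| < 1) (M : ℕ) :
    HasSum (fun K => Wl u v w K * T K M) (S u v w M) := by
  induction M with
  | zero =>
    have : (fun K => Wl u v w K * T K 0) = fun K => if K = [] then 1 else 0 := by
      funext K
      cases K <;> simp [Wl, T]
    rw [this]
    exact hasSum_ite_eq [] _
  | succ M ih =>
    have key : HasSum (fun K => Wl u v w K * (T K (M + 1) - T K M))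
        (if Odd M then aa u v w M * S u v w M else 0) := by
      apply hasSum_cons
      · simp [T]
      · by_cases hM : Odd M
        · rw [if_pos hM]
          refine hs_congr (hasSum_mul' (hasSum_wt (v := v) (w := w) hu hM.pos) ih) ?_ rfl
          rintro ⟨k, K⟩
          simp only [T, Finset.sum_range_succ, if_pos hM, Wl, List.map_cons, List.prod_cons]
          ring
        · rw [if_neg hM]
          refine hs_congr hasSum_zero ?_ rfl
          rintro ⟨k, K⟩
          simp [T, Finset.sum_range_succ, if_neg hM]
    refine hs_congr (ih.add key) ?_ rfl
    intro K
    ring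

lemma T_nonneg (K : List ℕ) : ∀ M, 0 ≤ T K M := by
  induction K with
  | nil => intro M; simp [T]
  | cons k K ih =>
    intro M
    simp only [T]
    refine Finset.sum_nonneg fun j _ => ?_
    split_ifs
    · exact mul_nonneg (by positivity) (ih j)
    · rfl

lemma T_le (K : List ℕ) : ∀ M : ℕ, T K M ≤ (M : ℝ) ^ K.length := by
  induction K with
  | nil => intro M; simp [T]
  | cons k K ih =>
    intro M
    simp only [T]
    have : ∀ j ∈ Finset.range M, (if Odd j then ((j : ℝ) ^ k)⁻¹ * T K j else 0)
        ≤ (M : ℝ) ^ K.length := by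
      intro j hj
      have hj' : (j : ℝ) ≤ M := by exact_mod_cast (Finset.mem_range.1 hj).le
      split_ifs with ho
      · have h1 : (1 : ℝ) ≤ j := by exact_mod_cast ho.pos
        calc ((j : ℝ) ^ k)⁻¹ * T K j ≤ 1 * T K j :=
              mul_le_mul_of_nonneg_right (inv_le_one_of_one_le₀ (one_le_pow₀ h1)) (T_nonneg K j)
          _ ≤ (j : ℝ) ^ K.length := by rw [one_mul]; exact ih j
          _ ≤ _ := by gcongr
      · positivity
    refine (Finset.sum_le_sum this).trans ?_
    simp [pow_succ, mul_comm]

noncomputable def A (K : List ℕ) (M : ℕ) (m : Fin K.length → ℕ) : ℝ :=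
  if (∀ i, Odd (m i)) ∧ (∀ i j : Fin K.length, i < j → m j < m i) ∧ ∀ i, m i < M then
    ∏ i, ((m i : ℝ) ^ K.get i)⁻¹ else 0

lemma A_nonneg (K M m) : 0 ≤ A K M m := by
  unfold A; split_ifs
  · positivity
  · rfl

lemma cond_cons {n : ℕ} (j : ℕ) (m : Fin n → ℕ) :
    ((∀ i, Odd ((Fin.cons j m : Fin (n + 1) → ℕ) i)) ∧ ∀ i i' : Fin (n + 1), i < i' →
      (Fin.cons j m : Fin (n + 1) → ℕ) i' < (Fin.cons j m : Fin (n + 1) → ℕ) i) ↔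
    Odd j ∧ (∀ i, Odd (m i)) ∧ (∀ i i' : Fin n, i < i' → m i' < m i) ∧ ∀ i, m i < j := by
  simp only [Fin.forall_fin_succ, Fin.cons_zero, Fin.cons_succ, Fin.succ_lt_succ_iff]
  simp
  tauto

lemma ite_helper {P Q R : Prop} [Decidable P] [Decidable Q] [Decidable R] {a b : ℝ}
    (h : P ↔ Q ∧ R) : (if P then a * b else 0) = if Q then a * (if R then b else 0) else 0 := by
  by_cases hQ : Q <;> by_cases hR : R <;> simp [h, hQ, hR]

lemma dite_helper {P Q R : Prop} [Decidable P] [Decidable Q] [Decidable R] {a b : ℝ} {f : P → ℝ}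
    (h : P ↔ Q ∧ R) (hf : ∀ p, f p = a * b) :
    (if h : P then f h else 0) = if Q then a * (if R then b else 0) else 0 := by
  rw [← ite_helper h]
  split_ifs with hp
  · exact hf hp
  · rfl

lemma A_cons (k : ℕ) (K : List ℕ) (M j : ℕ) (m : Fin K.length → ℕ) :
    A (k :: K) M (Fin.cons j m : Fin (K.length + 1) → ℕ) =
      if j < M ∧ Odd j then ((j : ℝ) ^ k)⁻¹ * A K j m else 0 := by
  have hc := cond_cons j m
  have h3 : (∀ i, (Fin.cons j m : Fin (K.length + 1) → ℕ) i < M) ↔ j < M ∧ ∀ i, m i < M := by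
    simp [Fin.forall_fin_succ]
  have hp : (∏ i : Fin (K.length + 1), (((Fin.cons j m : Fin (K.length + 1) → ℕ) i : ℝ) ^
      (k :: K).get i)⁻¹) = ((j : ℝ) ^ k)⁻¹ * ∏ i, ((m i : ℝ) ^ K.get i)⁻¹ := by
    rw [Fin.prod_univ_succ]
    simp
  unfold A
  simp only [List.length_cons]
  rw [hp]
  apply ite_helper
  rw [← and_assoc, hc, h3]
  constructor
  · tauto
  · rintro ⟨⟨h1, h2⟩, h4, h5, h6⟩
    exact ⟨⟨h2, h4, h5, h6⟩, h1, fun i => (h6 i).trans h1⟩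

lemma hasSum_A (K : List ℕ) : ∀ M, HasSum (A K M) (T K M) := by
  induction K with
  | nil =>
    intro M
    have : HasSum (A [] M) (A [] M (fun i => i.elim0)) := by
      refine hasSum_single _ ?_
      intro b hb
      exact absurd (funext fun i => i.elim0) hb
    refine hs_congr this (fun _ => rfl) ?_
    simp [A, T]
  | cons k K ih =>
    intro M
    have h1 : HasSum (fun x : ℕ × (Fin K.length → ℕ) =>
        if x.1 < M ∧ Odd x.1 then ((x.1 : ℝ) ^ k)⁻¹ * A K x.1 x.2 else 0) (T (k :: K) M) := by
      refine hasSum_prod_nonneg (g := fun j => if j < M ∧ Odd j then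
        ((j : ℝ) ^ k)⁻¹ * T K j else 0) ?_ ?_ ?_
      · rintro ⟨j, m⟩
        dsimp only
        split_ifs
        · exact mul_nonneg (by positivity) (A_nonneg _ _ _)
        · rfl
      · intro j
        dsimp only
        split_ifs
        · exact (ih j).mul_left _
        · exact hasSum_zero
      · have := hasSum_sum_of_ne_finset_zero (f := fun j => if j < M ∧ Odd j then
          ((j : ℝ) ^ k)⁻¹ * T K j else 0) (s := Finset.range M)
            (L := SummationFilter.unconditional ℕ) ?_
        · refine hs_congr this (fun _ => rfl) ?_
          simp only [T]
          refine Finset.sum_congr rfl fun j hj => ?_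
          simp [Finset.mem_range.1 hj]
        · intro j hj
          rw [if_neg]
          intro h
          exact hj (Finset.mem_range.2 h.1)
    have h2 := (Fin.consEquiv (n := K.length) (fun _ => ℕ)).hasSum_iff (f := A (k :: K) M)
      (a := T (k :: K) M)
    refine h2.1 (hs_congr h1 ?_ rfl)
    rintro ⟨j, m⟩
    exact A_cons k K M j m

lemma hasSum_Lt (k : ℕ) (K : List ℕ) {z : ℝ} (hz : 0 < z) (hz1 : z < 1) :
    HasSum (fun j : ℕ => if Odd j then z ^ j * ((j : ℝ) ^ k)⁻¹ * T K j else 0) (Lt (k :: K) z) := by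
  set g : ℕ → ℝ := fun j => if Odd j then z ^ j * ((j : ℝ) ^ k)⁻¹ * T K j else 0 with hg
  have hs : Summable g := by
    refine Summable.of_nonneg_of_le ?_ ?_
      (summable_pow_mul_geometric_of_norm_lt_one K.length
        (show ‖z‖ < 1 by rwa [Real.norm_of_nonneg hz.le]))
    · intro j
      simp only [hg]
      split_ifs
      · exact mul_nonneg (by positivity) (T_nonneg _ _)
      · rfl
    · intro j
      simp only [hg]
      split_ifs with ho
      · have h1 : (1 : ℝ) ≤ j := by exact_mod_cast ho.pos
        have h2 : ((j : ℝ) ^ k)⁻¹ ≤ 1 := inv_le_one_of_one_le₀ (one_le_pow₀ h1)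
        calc z ^ j * ((j : ℝ) ^ k)⁻¹ * T K j ≤ z ^ j * 1 * (j : ℝ) ^ K.length := by
              gcongr
              · exact T_nonneg _ _
              · exact T_le K j
          _ = _ := by ring
      · positivity
  have h1 : HasSum (fun x : ℕ × (Fin K.length → ℕ) =>
      if Odd x.1 then z ^ x.1 * ((x.1 : ℝ) ^ k)⁻¹ * A K x.1 x.2 else 0) (∑' j, g j) := by
    refine hasSum_prod_nonneg ?_ ?_ hs.hasSum
    · rintro ⟨j, m⟩
      dsimp only
      split_ifs
      · exact mul_nonneg (by positivity) (A_nonneg _ _ _)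
      · rfl
    · intro j
      simp only [hg]
      split_ifs
      · exact (hasSum_A K j).mul_left _
      · exact hasSum_zero
  have h2 : Lt (k :: K) z = ∑' j, g j := by
    rw [← h1.tsum_eq]
    refine ((Fin.consEquiv (n := K.length) (fun _ => ℕ)).tsum_eq _).symm.trans ?_
    refine tsum_congr ?_
    rintro ⟨j, m⟩
    have hc := cond_cons j m
    have hp : (∏ i : Fin (K.length + 1), (((Fin.cons j m : Fin (K.length + 1) → ℕ) i : ℝ) ^
        (k :: K).get i)⁻¹) = ((j : ℝ) ^ k)⁻¹ * ∏ i, ((m i : ℝ) ^ K.get i)⁻¹ := by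
      rw [Fin.prod_univ_succ]
      simp
    have e : (Fin.consEquiv (n := K.length) (fun _ => ℕ)) (j, m) =
      (Fin.cons j m : Fin (K.length + 1) → ℕ) := rfl
    rw [e]
    simp only [List.length_cons]
    rw [hp]
    unfold A
    apply dite_helper
    · rw [← hc]
      simp
    · intro p
      rw [mul_assoc]
      rfl
  rw [h2]
  exact hs.hasSum

lemma B_bound {u : ℝ} (hu : |u| ≤ 1 / 4) {m : ℕ} (hm : 1 ≤ m) : |B u m| ≤ 2 / m := by
  have h1 : (1 : ℝ) ≤ m := by exact_mod_cast hm
  have h2 := abs_le.1 hu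
  have h3 : 0 < (m : ℝ) - u := by linarith
  rw [B, abs_of_pos (by positivity), div_le_div_iff₀ (by positivity) (by positivity)]
  nlinarith

lemma S_bound {u v w : ℝ} (hu : |u| ≤ 1 / 4) (hv : |v| ≤ 1 / 4) (hw : |w| ≤ 1 / 4) (M : ℕ) :
    |S u v w M| ≤ max (M : ℝ) 1 := by
  induction M with
  | zero => simp [S]
  | succ M ih =>
    by_cases ho : Odd M
    · have h1 : (1 : ℝ) ≤ M := by exact_mod_cast ho.pos
      rw [max_eq_left h1] at ih
      have ha : |aa u v w M| ≤ 1 / M := by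
        calc |aa u v w M| ≤ |v * (M : ℝ)⁻¹| + |w * B u M| := abs_add_le _ _
          _ = |v| * (M : ℝ)⁻¹ + |w| * |B u M| := by
            rw [abs_mul, abs_mul, abs_of_pos (by positivity : (0 : ℝ) < (M : ℝ)⁻¹)]
          _ ≤ 1 / 4 * (M : ℝ)⁻¹ + 1 / 4 * (2 / M) := by
            gcongr
            exact B_bound hu ho.pos
          _ = (3 / 4) * (1 / M) := by ring
          _ ≤ 1 / M := by
            have : (0 : ℝ) < 1 / M := by positivity
            linarith
      refine le_trans ?_ (le_max_left _ _)
      simp only [S, if_pos ho]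
      calc _ ≤ |S u v w M| + |aa u v w M * S u v w M| := abs_add_le _ _
        _ ≤ M + 1 / M * M := by
          rw [abs_mul]
          gcongr
        _ = _ := by
          push_cast
          field_simp
    · simp only [S, if_neg ho, add_zero]
      refine ih.trans ?_
      push_cast
      gcongr
      linarith

lemma cc_bound {u v w : ℝ} (hu : |u| ≤ 1 / 4) (hv : |v| ≤ 1 / 4) (hw : |w| ≤ 1 / 4) (m : ℕ) :
    |cc u v w m| ≤ 2 := by
  unfold cc
  split_ifs with ho
  · have h1 : (1 : ℝ) ≤ m := by exact_mod_cast ho.pos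
    have hS := S_bound hu hv hw m
    rw [max_eq_left h1] at hS
    rw [abs_mul]
    calc _ ≤ 2 / (m : ℝ) * m := by
          gcongr
          exact B_bound hu ho.pos
      _ = 2 := by field_simp
  · simp

lemma abs_u1 (u : ℝ) (k : ℕ) : |u1 u k| = u1 |u| k := by
  unfold u1; split_ifs <;> simp

lemma abs_wt (u v w : ℝ) (k : ℕ) : |wt u v w k| = wt |u| |v| |w| k := by
  unfold wt
  by_cases hk : k = 1
  · subst hk; simp [u1]
  · simp [hk, abs_mul, abs_u1]

lemma abs_Wl (u v w : ℝ) (K : List ℕ) : |Wl u v w K| = Wl |u| |v| |w| K := by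
  induction K with
  | nil => simp [Wl]
  | cons k K ih =>
    simp only [Wl, List.map_cons, List.prod_cons, abs_mul, abs_wt] at ih ⊢
    rw [ih]

noncomputable def ff (u v w z : ℝ) (x : ℕ × (ℕ × List ℕ)) : ℝ :=
  if Odd x.1 then z ^ x.1 * ((u1 u x.2.1 * ((x.1 : ℝ) ^ x.2.1)⁻¹) * (Wl u v w x.2.2 * T x.2.2 x.1))
  else 0

lemma abs_ff (u v w : ℝ) {z : ℝ} (hz : 0 < z) (x) : |ff u v w z x| = ff |u| |v| |w| z x := by
  unfold ff
  split_ifs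
  · simp only [abs_mul, abs_u1, abs_Wl, abs_inv, abs_pow, Nat.abs_cast, abs_of_pos hz,
      abs_of_nonneg (T_nonneg _ _)]
  · simp

lemma hasSum_ff {u v w z : ℝ} (hu : |u| ≤ 1 / 4) (m : ℕ) :
    HasSum (fun x => ff u v w z (m, x)) (cc u v w m * z ^ m) := by
  by_cases ho : Odd m
  · have hu1 : |u| < 1 := by linarith
    refine hs_congr ((hasSum_mul' (hasSum_u1 hu1 ho.pos)
      (hasSum_S (v := v) (w := w) hu1 m)).mul_left (z ^ m)) ?_ ?_
    · intro x; simp [ff, ho]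
    · simp [cc, ho]; ring
  · refine hs_congr hasSum_zero ?_ ?_
    · intro x; simp [ff, ho]
    · simp [cc, ho]

lemma summable_bdd {c : ℕ → ℝ} {C : ℝ} (k : ℕ) (hc : ∀ m, |c m| ≤ C * (m : ℝ) ^ k) {z : ℝ}
    (hz : |z| < 1) : Summable fun m => c m * z ^ m := by
  have := (summable_pow_mul_geometric_of_norm_lt_one k
        (show ‖|z|‖ < 1 by rwa [Real.norm_eq_abs, abs_abs])).mul_left C
  refine Summable.of_norm_bounded this ?_
  intro m
  rw [Real.norm_eq_abs, abs_mul, abs_pow, ← mul_assoc]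
  gcongr
  exact hc m

lemma hasSum_main {u v w z : ℝ} (hu : |u| ≤ 1 / 4) (hv : |v| ≤ 1 / 4) (hw : |w| ≤ 1 / 4)
    (hz : 0 < z) (hz1 : z < 1) :
    HasSum (fun x : ℕ × List ℕ => u1 u x.1 * Wl u v w x.2 * Lt (x.1 :: x.2) z)
      (∑' m, cc u v w m * z ^ m) := by
  have hz' : |z| < 1 := by rwa [abs_of_pos hz]
  have hs : Summable (ff u v w z) := by
    apply Summable.of_norm
    have hu' : |(|u|)| ≤ 1 / 4 := by rwa [abs_abs]
    have hv' : |(|v|)| ≤ 1 / 4 := by rwa [abs_abs]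
    have hw' : |(|w|)| ≤ 1 / 4 := by rwa [abs_abs]
    have h1 : Summable fun m => cc |u| |v| |w| m * z ^ m :=
      summable_bdd (C := 2) 0 (by simpa using cc_bound hu' hv' hw') hz'
    refine (hasSum_prod_nonneg (g := fun m => cc |u| |v| |w| m * z ^ m) ?_ ?_ h1.hasSum).summable
    · intro x; exact norm_nonneg _
    · intro m
      refine hs_congr (hasSum_ff hu' m) ?_ rfl
      intro x
      rw [Real.norm_eq_abs, abs_ff _ _ _ hz]
  have e1 := (hs.hasSum.prod_fiberwise (fun m => hasSum_ff hu m)).tsum_eq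
  rw [e1]
  have h2 := (Equiv.prodComm (ℕ × List ℕ) ℕ).hasSum_iff.2 hs.hasSum
  refine h2.prod_fiberwise ?_
  rintro ⟨k, K⟩
  refine hs_congr ((hasSum_Lt k K hz hz1).mul_left (u1 u k * Wl u v w K)) ?_ rfl
  intro m
  simp only [Function.comp, Equiv.prodComm_apply, Prod.swap, ff]
  by_cases ho : Odd m
  · simp only [ho, if_true]; ring
  · simp [ho]

noncomputable def Fk (u v w z : ℝ) (K : List ℕ) : ℝ :=
  if Admissible K then Lt K z * u ^ (K.map (· - 2)).sum * v ^ (K.count 1) *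
    w ^ (K.countP (fun i => decide (2 ≤ i)) - 1) else 0

lemma Wl_eq (u v w : ℝ) (K : List ℕ) : Wl u v w K = if ∀ i ∈ K, 1 ≤ i then
    u ^ (K.map (· - 2)).sum * v ^ (K.count 1) * w ^ (K.countP (fun i => decide (2 ≤ i))) else 0 := by
  induction K with
  | nil => simp [Wl]
  | cons k K ih =>
    have : Wl u v w (k :: K) = wt u v w k * Wl u v w K := by simp [Wl]
    rw [this, ih]
    rcases k with _ | _ | k
    · simp [wt, u1]
    · by_cases h : ∀ i ∈ K, 1 ≤ i
      · rw [if_pos h, if_pos (by simpa using h)]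
        simp [wt, u1]; ring
      · rw [if_neg h, if_neg (by simpa using h)]
        simp
    · by_cases h : ∀ i ∈ K, 1 ≤ i
      · rw [if_pos h, if_pos (by simpa using h)]
        simp [wt, u1]; ring
      · rw [if_neg h, if_neg (by simpa using h)]
        simp

lemma hasSum_Fk {u v w z : ℝ} (hu : |u| ≤ 1 / 4) (hv : |v| ≤ 1 / 4) (hw : |w| ≤ 1 / 4)
    (hz : 0 < z) (hz1 : z < 1) :
    HasSum (Fk u v w z) (∑' m, cc u v w m * z ^ m) := by
  apply hasSum_cons
  · simp [Fk, Admissible]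
  · refine hs_congr (hasSum_main hu hv hw hz hz1) ?_ rfl
    rintro ⟨k, K⟩
    dsimp only
    rw [Wl_eq]
    have hA : Admissible (k :: K) ↔ 2 ≤ k ∧ ∀ i ∈ K, 1 ≤ i := by
      simp only [Admissible, List.mem_cons, forall_eq_or_imp, List.headI_cons]
      constructor
      · tauto
      · rintro ⟨h1, h2⟩
        exact ⟨⟨by omega, h2⟩, h1⟩
    by_cases hk : 2 ≤ k
    · by_cases h : ∀ i ∈ K, 1 ≤ i
      · have h2 : k ≠ 1 := by omega
        rw [if_pos h, u1, if_pos hk, Fk, if_pos (hA.2 ⟨hk, h⟩)]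
        simp [hk, h2, pow_add, List.count_cons]; ring
      · rw [if_neg h, Fk, if_neg (fun h' => h (hA.1 h').2)]
        simp
    · rw [u1, if_neg hk, Fk, if_neg (fun h' => hk (hA.1 h').1)]
      simp

lemma list_stats (K : List ℕ) (h : ∀ i ∈ K, 1 ≤ i) :
    K.sum = (K.map (· - 2)).sum + K.count 1 + 2 * K.countP (fun i => decide (2 ≤ i)) ∧
    K.length = K.count 1 + K.countP (fun i => decide (2 ≤ i)) := by
  induction K with
  | nil => simp
  | cons k K ih =>
    obtain ⟨h1, h2⟩ := ih fun i hi => h i (by simp [hi])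
    have hk : 1 ≤ k := h k (by simp)
    simp only [List.sum_cons, List.map_cons, List.count_cons, List.countP_cons, List.length_cons,
      beq_iff_eq, decide_eq_true_eq]
    split_ifs <;> omega

lemma phi_eq {u v w z : ℝ} (hu : |u| ≤ 1 / 4) (hv : |v| ≤ 1 / 4) (hw : |w| ≤ 1 / 4)
    (hz : 0 < z) (hz1 : z < 1) :
    (∑' p : ℕ × ℕ × ℕ,
          G0hz (p.1 + p.2.1 + 2 * p.2.2 + 2) (p.2.1 + p.2.2 + 1) (p.2.2 + 1) z
            * u ^ p.1 * v ^ p.2.1 * w ^ p.2.2) = ∑' m, cc u v w m * z ^ m := by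
  have h := (hasSum_Fk hu hv hw hz hz1).tsum_fiberwise (fun K : List ℕ =>
    (((K.map (· - 2)).sum, K.count 1, K.countP (fun i => decide (2 ≤ i)) - 1) : ℕ × ℕ × ℕ))
  rw [← h.tsum_eq]
  refine tsum_congr ?_
  rintro ⟨a, b, c⟩
  dsimp only
  rw [tsum_subtype, G0hz, mul_assoc, mul_assoc, ← tsum_mul_right]
  refine tsum_congr fun K => ?_
  by_cases hA : Admissible K
  · obtain ⟨h1, h2⟩ := list_stats K hA.1
    have h3 : 1 ≤ K.countP (fun i => decide (2 ≤ i)) := by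
      have := hA.2
      cases K with
      | nil => simp at this
      | cons k K => simp at this; simp [this]
    by_cases hc : K.sum = a + b + 2 * c + 2 ∧ K.length = b + c + 1 ∧
        K.countP (fun i => decide (2 ≤ i)) = c + 1
    · rw [if_pos ⟨hA, hc⟩, Set.indicator_of_mem, Fk, if_pos hA]
      · have e1 : (K.map (· - 2)).sum = a := by omega
        have e2 : K.count 1 = b := by omega
        rw [e1, e2, hc.2.2, Nat.add_sub_cancel]
        ring
      · simp only [Set.mem_preimage, Set.mem_singleton_iff, Prod.mk.injEq]
        omega
    · rw [if_neg (fun h => hc h.2), Set.indicator_of_notMem, zero_mul]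
      simp only [Set.mem_preimage, Set.mem_singleton_iff, Prod.mk.injEq]
      omega
  · rw [if_neg (fun h => hA h.1), zero_mul]
    have : Fk u v w z K = 0 := by rw [Fk, if_neg hA]
    exact (Set.indicator_apply_eq_zero.2 fun _ => this).symm

lemma hasDeriv_series {c : ℕ → ℝ} {C : ℝ} (k : ℕ) (hc : ∀ m, |c m| ≤ C * (m : ℝ) ^ k) {z : ℝ}
    (hz : |z| < 1) :
    HasDerivAt (fun z => ∑' m, c m * z ^ m) (∑' m, c m * (m * z ^ (m - 1))) z := by
  obtain ⟨r, hzr, hr1⟩ := exists_between hz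
  have hr0 : 0 < r := (abs_nonneg z).trans_lt hzr
  have hC : ∀ m : ℕ, 0 ≤ C * (m : ℝ) ^ k := fun m : ℕ => (abs_nonneg _).trans (hc m)
  have hsu : Summable fun m : ℕ => C * (m : ℝ) ^ k * (m * r ^ (m - 1)) := by
    have := (summable_pow_mul_geometric_of_norm_lt_one (k + 1)
        (show ‖r‖ < 1 by rwa [Real.norm_of_nonneg hr0.le])).mul_left (C / r)
    refine this.congr ?_
    intro m
    rcases m with _ | m
    · simp
    · simp only [Nat.add_sub_cancel]
      field_simp
      ring
  refine hasDerivAt_tsum_of_isPreconnected (g := fun m z => c m * z ^ m)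
    (g' := fun m z => c m * (m * z ^ (m - 1))) (t := Set.Ioo (-r) r) (y₀ := 0) hsu isOpen_Ioo
    isPreconnected_Ioo ?_ ?_ ⟨by linarith, hr0⟩ ?_ (abs_lt.1 hzr)
  · intro n y _
    exact (hasDerivAt_pow n y).const_mul _
  · intro n y hy
    have hy' : |y| ≤ r := (abs_lt.2 hy).le
    rw [Real.norm_eq_abs, abs_mul, abs_mul, abs_pow, Nat.abs_cast]
    gcongr
    · exact hC n
    · exact hc n
  · exact summable_bdd k hc (by simp)

lemma hasDeriv_series' {c : ℕ → ℝ} {C : ℝ} (k : ℕ) (hc : ∀ m, |c m| ≤ C * (m : ℝ) ^ k) {z : ℝ}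
    (hz0 : 0 < z) (hz : z < 1) :
    HasDerivAt (fun z => ∑' m, c m * z ^ m) ((∑' m, (m * c m) * z ^ m) / z) z := by
  have := hasDeriv_series k hc (z := z) (by rwa [abs_of_pos hz0])
  convert this using 1
  rw [← tsum_div_const]
  refine tsum_congr fun m => ?_
  rcases m with _ | m
  · simp
  · simp only [Nat.add_sub_cancel]
    field_simp
    ring

lemma cc_rec {u v w : ℝ} (hu : |u| ≤ 1 / 4) (m : ℕ) :
    ((m : ℝ) + 2) * (m + 2 - u) * cc u v w (m + 2) = ((m + v) * (m - u) + w) * cc u v w m := by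
  have hu' := abs_le.1 hu
  by_cases ho : Odd m
  · have h1 : (1 : ℝ) ≤ m := by exact_mod_cast ho.pos
    have ho1 : ¬ Odd (m + 1) := by simpa using ho.add_one
    have ho2 : Odd (m + 2) := by
      rw [Nat.odd_add]
      simp [ho]
    have h2 : (m : ℝ) - u ≠ 0 := by linarith
    have h3 : (m : ℝ) + 2 - u ≠ 0 := by linarith
    simp only [cc, if_pos ho, if_pos ho2, S, if_neg ho1, B, aa]
    push_cast
    field_simp
    ring
  · have ho2 : ¬ Odd (m + 2) := by
      rw [Nat.odd_add]
      simpa using ho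
    simp [cc, ho, ho2]

lemma cc_one {u v w : ℝ} (hu : |u| ≤ 1 / 4) : (1 - u) * cc u v w 1 = 1 := by
  have hu' := abs_le.1 hu
  have h3 : 1 - u ≠ 0 := by linarith
  simp [cc, S, B]
  field_simp

lemma final {u v w z : ℝ} (hu : |u| ≤ 1 / 4) (hv : |v| ≤ 1 / 4) (hw : |w| ≤ 1 / 4)
    (hz : 0 < z) (hz1 : z < 1) (Φ : ℝ → ℝ)
    (hΦ : ∀ y, 0 < y → y < 1 → Φ y = ∑' m, cc u v w m * y ^ m) :
    z * (1 - z ^ 2) * deriv (deriv Φ) z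
            + ((1 - u) * (1 - z ^ 2) - v * z ^ 2) * deriv Φ z
            + (u * v - w) * z * Φ z = 1 := by
  have b0 : ∀ m, |cc u v w m| ≤ 2 * (m : ℝ) ^ 0 := by simpa using cc_bound hu hv hw
  have b1 : ∀ m : ℕ, |m * cc u v w m| ≤ 2 * (m : ℝ) ^ 1 := by
    intro m
    rw [abs_mul, Nat.abs_cast, pow_one, mul_comm]
    gcongr
    exact cc_bound hu hv hw m
  have b2 : ∀ m : ℕ, |m * (m * cc u v w m)| ≤ 2 * (m : ℝ) ^ 2 := by
    intro m
    rw [abs_mul, Nat.abs_cast]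
    calc _ ≤ (m : ℝ) * (2 * (m : ℝ) ^ 1) := by gcongr; exact b1 m
      _ = _ := by ring
  have hz' : |z| < 1 := by rwa [abs_of_pos hz]
  have s0 := (summable_bdd 0 b0 hz').hasSum
  have s1 := (summable_bdd 1 b1 hz').hasSum
  have s2 := (summable_bdd 2 b2 hz').hasSum
  have hd1 : ∀ y ∈ Set.Ioo (0 : ℝ) 1,
      HasDerivAt Φ ((∑' m : ℕ, (m * cc u v w m) * y ^ m) / y) y := by
    intro y hy
    refine (hasDeriv_series' 0 b0 hy.1 hy.2).congr_of_eventuallyEq ?_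
    filter_upwards [isOpen_Ioo.mem_nhds hy] with x hx
    exact hΦ x hx.1 hx.2
  have hd2 : HasDerivAt (deriv Φ) (((∑' m : ℕ, (m * (m * cc u v w m)) * z ^ m) / z * z -
      (∑' m : ℕ, (m * cc u v w m) * z ^ m) * 1) / z ^ 2) z := by
    have := (hasDeriv_series' 1 b1 hz hz1).div (hasDerivAt_id z) hz.ne'
    refine this.congr_of_eventuallyEq ?_
    filter_upwards [isOpen_Ioo.mem_nhds (⟨hz, hz1⟩ : z ∈ Set.Ioo (0 : ℝ) 1)] with x hx
    exact (hd1 x hx).deriv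
  rw [hd2.deriv, (hd1 z ⟨hz, hz1⟩).deriv, hΦ z hz hz1]
  set f0 := ∑' m, cc u v w m * z ^ m
  set h1 := ∑' m : ℕ, (m * cc u v w m) * z ^ m
  set h2 := ∑' m : ℕ, (m * (m * cc u v w m)) * z ^ m
  have k1 : HasSum (fun m : ℕ => (m : ℝ) * (m - u) * cc u v w m * z ^ m) (h2 - u * h1) :=
    hs_congr (s2.sub (s1.mul_left u)) (fun m => by ring) rfl
  rw [← hasSum_nat_add_iff' 2] at k1
  have k2 := ((s2.add (s1.mul_left (v - u))).add (s0.mul_left (w - u * v))).mul_left (z ^ 2)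
  have k3 := k1.unique (hs_congr k2 (fun m => by
    have := cc_rec (v := v) (w := w) hu m
    push_cast
    rw [this]
    ring) rfl)
  have k4 := cc_one (v := v) (w := w) hu
  simp only [Finset.sum_range_succ, Finset.sum_range_zero] at k3
  push_cast at k3
  simp only [zero_mul, zero_add, one_mul, pow_one, k4] at k3
  have hz0 := hz.ne'
  field_simp
  linear_combination k3

end PhiODE

/-- The generating function `Φ₀(z)` of the sums `G₀(k,n,s;z)` of one-variable multiple
polylogarithms satisfies the differential equation
`z(1-z²)Φ₀'' + [(1-u)(1-z²) - vz²]Φ₀' + (uv-w)zΦ₀ = 1` on `(0,1)` (Proposition 3.1). -/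
theorem phi0_differential_equation :
    ∃ δ > (0 : ℝ), ∀ u v w : ℝ, |u| < δ → |v| < δ → |w| < δ →
      ∀ z ∈ Set.Ioo (0 : ℝ) 1,
        (fun Φ₀ : ℝ → ℝ =>
          z * (1 - z ^ 2) * deriv (deriv Φ₀) z
            + ((1 - u) * (1 - z ^ 2) - v * z ^ 2) * deriv Φ₀ z
            + (u * v - w) * z * Φ₀ z = 1)
        (fun z : ℝ => ∑' p : ℕ × ℕ × ℕ,
          G0hz (p.1 + p.2.1 + 2 * p.2.2 + 2) (p.2.1 + p.2.2 + 1) (p.2.2 + 1) z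
            * u ^ p.1 * v ^ p.2.1 * w ^ p.2.2) := by
  refine ⟨1 / 4, by norm_num, fun u v w hu hv hw z hz => ?_⟩
  exact PhiODE.final hu.le hv.le hw.le hz.1 hz.2 _
    fun y h0 h1 => PhiODE.phi_eq hu.le hv.le hw.le h0 h1
end

section
/- There exists δ > 0 such that for all real u, v, w with |u|, |v|, |w| < δ and all real z with 0 ≤ z < 1, ∑_{k ≥ n+s, n ≥ s ≥ 1} G_0(k,n,s;z) u^{k−n−s} v^{n−s} w^{s−1} = (z/(1−u)) · ₃F₂(α, β, 1; (3−u)/2, 3/2; z²), where α and β are the two (possibly complex) roots of X² − (1 − u/2 + v/2)X + (1 − u + v − uv + w)/4 = 0, and the series converges absolutely. -/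
open scoped BigOperators

namespace Phi

noncomputable def c (u v w : ℝ) : ℕ → ℝ
  | 0 => 0
  | 1 => v
  | (k+2) => w * u ^ k

noncomputable def S (u v w : ℝ) : ℕ → List (ℕ × ℕ) → ℝ
  | _, [] => 1
  | N, (x :: l) => if x.2 < N then c u v w x.1 * ((2 * (x.2:ℝ) + 1) ^ x.1)⁻¹ * S u v w x.2 l else 0

noncomputable def T (u v w z : ℝ) : List (ℕ × ℕ) → ℝ
  | [] => 0
  | (x :: l) => z ^ (2 * x.2 + 1) * (c u 0 1 x.1 * ((2 * (x.2:ℝ) + 1) ^ x.1)⁻¹) * S u v w x.2 l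

lemma hasSum_c (u v w : ℝ) (hu : |u| < 1) (j : ℕ) :
    HasSum (fun k => c u v w k * ((2 * (j:ℝ) + 1) ^ k)⁻¹)
      (v / (2 * j + 1) + w / ((2 * j + 1) * (2 * j + 1 - u))) := by
  have hm : (1:ℝ) ≤ 2 * j + 1 := by have : (0:ℝ) ≤ j := by positivity
                                    linarith
  set m : ℝ := 2 * j + 1 with hmdef
  have hr : |u / m| < 1 := by
    rw [abs_div, abs_of_pos (by linarith : 0 < m), div_lt_one (by linarith)]; linarith
  have h1 := (hasSum_geometric_of_abs_lt_one hr).mul_left (w / m ^ 2)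
  have hu1 := abs_lt.1 hu
  have hmu : m - u ≠ 0 := by linarith [hu1.2]
  have hm0 : m ≠ 0 := by linarith
  rw [← hasSum_nat_add_iff' 2]
  have e1 : (fun k => c u v w (k + 2) * (m ^ (k + 2))⁻¹) = fun i => w / m ^ 2 * (u / m) ^ i := by
    ext k
    simp only [c, div_pow]
    field_simp
    try ring
  have e2 : v / m + w / (m * (m - u)) - ∑ i ∈ Finset.range 2, c u v w i * (m ^ i)⁻¹ = w / m ^ 2 * (1 - u / m)⁻¹ := by
    simp only [Finset.sum_range_succ, Finset.sum_range_zero, c]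
    rw [one_sub_div hm0]
    field_simp
    ring
  rw [e1, e2]
  exact h1

noncomputable def P (u v w : ℝ) (N : ℕ) : ℝ :=
  ∏ i ∈ Finset.range N, (1 + (v / (2 * i + 1) + w / ((2 * (i:ℝ) + 1) * (2 * i + 1 - u))))

lemma hasSum_mul' {α β : Type*} {f : α → ℝ} {g : β → ℝ} {a b : ℝ} (hf : HasSum f a)
    (hg : HasSum g b) : HasSum (fun x : α × β => f x.1 * g x.2) (a * b) :=
  hf.mul hg (summable_mul_of_summable_norm hf.summable.norm hg.summable.norm)

lemma hasSum_S (u v w : ℝ) (hu : |u| < 1) (N : ℕ) : HasSum (S u v w N) (P u v w N) := by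
  induction N with
  | zero =>
    convert hasSum_ite_eq ([] : List (ℕ × ℕ)) (1:ℝ) using 1
    · ext l; cases l <;> simp [S]
    · simp [P]
  | succ N ih =>
    have h2 := hasSum_mul' (hasSum_c u v w hu N) ih
    have inj : Function.Injective (fun x : ℕ × List (ℕ × ℕ) => (x.1, N) :: x.2) := by
      rintro ⟨a, b⟩ ⟨a', b'⟩ h; simp at h; simp [h]
    have h3 := (hasSum_extend_zero inj).2 h2
    have h4 := ih.add h3
    convert h4 using 1
    · ext l
      rcases l with _ | ⟨⟨k, j⟩, l⟩
      · rw [Function.extend_apply']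
        · simp [S]
        · rintro ⟨x, hx⟩; simp at hx
      · by_cases hj : j = N
        · subst hj
          have := inj.extend_apply (fun x : ℕ × List (ℕ × ℕ) => c u v w x.1 * ((2 * (j:ℝ) + 1) ^ x.1)⁻¹ * S u v w j x.2) 0 (k, l)
          simp only at this
          rw [this]
          simp [S]
        · rw [Function.extend_apply']
          · have : j < N + 1 ↔ j < N := by omega
            simp [S, this]
          · rintro ⟨x, hx⟩; simp at hx; exact hj hx.1.2.symm
    · simp only [P, Finset.prod_range_succ]; ring

lemma hasSum_fib (u v w z : ℝ) (hu : |u| < 1) (j : ℕ) :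
    HasSum (fun x : ℕ × List (ℕ × ℕ) => T u v w z ((x.1, j) :: x.2))
      (z ^ (2 * j + 1) * (1 / ((2 * j + 1) * (2 * j + 1 - u))) * P u v w j) := by
  have h1 := (hasSum_c u 0 1 hu j).mul_left (z ^ (2 * j + 1))
  have h2 := hasSum_mul' h1 (hasSum_S u v w hu j)
  simpa [T] using h2

lemma P_bound (u v w : ℝ) (hu : |u| < 1/4) (hv : |v| < 1/4) (hw : |w| < 1/4) (hv0 : 0 ≤ v)
   (hw0 : 0 ≤ w) (N : ℕ) : 0 ≤ P u v w N ∧ P u v w N ≤ N + 1 := by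
  induction N with
  | zero => simp [P]
  | succ N ih =>
    obtain ⟨i1, i2⟩ := ih
    rw [abs_lt] at hu hv hw
    have hN : (0:ℝ) ≤ N := by positivity
    have a1 : 0 < (2 * (N:ℝ) + 1) := by positivity
    have a2 : 3/4 ≤ (2 * (N:ℝ) + 1 - u) := by linarith
    have e1 : v / (2 * N + 1) ≤ (1/4) / (2 * N + 1) := by gcongr; linarith
    have e2 : w / ((2 * (N:ℝ) + 1) * (2 * N + 1 - u)) ≤ (1/4) / ((2 * N + 1) * (3/4)) := by
      gcongr; exact hw.2.le
    have e3 : (1/4) / ((2 * (N:ℝ) + 1) * (3/4)) = (1/3) / (2 * N + 1) := by field_simp; try norm_num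
    have e4 : (1/4) / (2 * (N:ℝ) + 1) + (1/3) / (2 * N + 1) ≤ 1 / (N + 1) := by
      rw [← add_div, div_le_div_iff₀ a1 (by positivity)]; linarith
    have p1 : 0 ≤ v / (2 * (N:ℝ) + 1) := by positivity
    have p2 : 0 ≤ w / ((2 * (N:ℝ) + 1) * (2 * N + 1 - u)) := by
      apply div_nonneg hw0; apply mul_nonneg <;> linarith
    have : P u v w (N+1) = P u v w N * (1 + (v / (2 * N + 1) + w / ((2 * (N:ℝ) + 1) * (2 * N + 1 - u)))) := by
      simp [P, Finset.prod_range_succ]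
    rw [this]
    refine ⟨by positivity, ?_⟩
    calc _ ≤ ((N:ℝ) + 1) * (1 + 1 / (N + 1)) := by gcongr; linarith
      _ = _ := by push_cast; field_simp; try ring

lemma c_abs (u v w : ℝ) (k : ℕ) : |c u v w k| = c |u| |v| |w| k := by
  rcases k with _ | _ | k <;> simp [c, abs_mul, abs_pow]

lemma S_abs (u v w : ℝ) (N : ℕ) (l : List (ℕ × ℕ)) : |S u v w N l| = S |u| |v| |w| N l := by
  induction l generalizing N with
  | nil => simp [S]
  | cons x l ih =>
    have : (0:ℝ) < 2 * (x.2:ℝ) + 1 := by positivity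
    simp only [S]
    split_ifs <;> simp [abs_mul, c_abs, ih, abs_inv, abs_pow, abs_of_pos this]

lemma T_abs (u v w z : ℝ) (hz : 0 ≤ z) (l : List (ℕ × ℕ)) :
    |T u v w z l| = T |u| |v| |w| z l := by
  rcases l with _ | ⟨x, l⟩
  · simp [T]
  · have : (0:ℝ) < 2 * (x.2:ℝ) + 1 := by positivity
    simp [T, abs_mul, c_abs, S_abs, abs_inv, abs_pow, abs_of_pos this, abs_of_nonneg hz]

lemma summable_main (u v w z : ℝ) (hu : |u| < 1/4) (hv : |v| < 1/4) (hw : |w| < 1/4) (hv0 : 0 ≤ v)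
   (hw0 : 0 ≤ w) (hz : 0 ≤ z) (hz1 : z < 1) :
   Summable (fun j : ℕ => z ^ (2 * j + 1) * (1 / ((2 * j + 1) * (2 * j + 1 - u))) * P u v w j) := by
  have hs : Summable (fun j : ℕ => 2 * (((j:ℝ) ^ 1 * (z ^ 2) ^ j) + (z^2) ^ j)) := by
    have hz2 : ‖z ^ 2‖ < 1 := by
      rw [Real.norm_eq_abs, abs_of_nonneg (by positivity)]; nlinarith
    exact ((summable_pow_mul_geometric_of_norm_lt_one 1 hz2).add
      (summable_geometric_of_norm_lt_one hz2)).mul_left 2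
  refine Summable.of_nonneg_of_le (fun j => ?_) (fun j => ?_) hs
  · have := (P_bound u v w hu hv hw hv0 hw0 j).1
    have h2 : 0 < 2 * (j:ℝ) + 1 - u := by
      have : (0:ℝ) ≤ j := by positivity
      linarith [(abs_lt.1 hu).2]
    positivity
  · obtain ⟨h1, h2⟩ := P_bound u v w hu hv hw hv0 hw0 j
    have hj : (0:ℝ) ≤ j := by positivity
    have h3 : 3/4 ≤ 2 * (j:ℝ) + 1 - u := by linarith [(abs_lt.1 hu).2]
    have h4 : 1 / ((2 * (j:ℝ) + 1) * (2 * j + 1 - u)) ≤ 2 := by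
      rw [div_le_iff₀ (by positivity)]; nlinarith
    have h5 : z ^ (2 * j + 1) ≤ (z^2)^j := by
      rw [pow_succ, pow_mul]; exact mul_le_of_le_one_right (by positivity) hz1.le
    calc _ ≤ (z^2)^j * 2 * ((j:ℝ) + 1) := by gcongr
      _ = _ := by ring

lemma inj_cons : Function.Injective (fun x : ℕ × (ℕ × List (ℕ × ℕ)) => (x.2.1, x.1) :: x.2.2) := by
  rintro ⟨a, b, d⟩ ⟨a', b', d'⟩ h; simp at h; simp [h]

lemma summable_T_cons (u v w z : ℝ) (hu : |u| < 1/4) (hv : |v| < 1/4) (hw : |w| < 1/4)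
    (hz : 0 ≤ z) (hz1 : z < 1) :
    Summable (fun x : ℕ × (ℕ × List (ℕ × ℕ)) => T u v w z ((x.2.1, x.1) :: x.2.2)) := by
  rw [← summable_abs_iff]
  simp only [T_abs _ _ _ _ hz]
  have hu' : |(|u|)| < 1 := by rw [abs_abs]; linarith
  rw [summable_prod_of_nonneg]
  · refine ⟨fun j => (hasSum_fib _ _ _ z hu' j).summable, ?_⟩
    convert summable_main |u| |v| |w| z (by simpa using hu) (by simpa using hv) (by simpa using hw) (abs_nonneg _) (abs_nonneg _) hz hz1 using 2 with j
    exact (hasSum_fib _ _ _ z hu' j).tsum_eq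
  · intro x; simp only [Pi.zero_apply]; rw [← T_abs _ _ _ _ hz]; exact abs_nonneg _

lemma hasSum_T (u v w z : ℝ) (hu : |u| < 1/4) (hv : |v| < 1/4) (hw : |w| < 1/4)
    (hz : 0 ≤ z) (hz1 : z < 1) :
    HasSum (T u v w z) (∑' j : ℕ, z ^ (2 * j + 1) * (1 / ((2 * j + 1) * (2 * j + 1 - u))) * P u v w j) := by
  have h := (summable_T_cons u v w z hu hv hw hz hz1).hasSum
  have h2 := h.prod_fiberwise (fun j => hasSum_fib u v w z (by linarith) j)
  rw [h2.tsum_eq]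
  refine (inj_cons.hasSum_iff ?_).1 h
  intro l hl
  rcases l with _ | ⟨⟨k, j⟩, l⟩
  · simp [T]
  · exact absurd ⟨(j, k, l), rfl⟩ hl

lemma final (u v w z : ℝ) (hu : |u| < 1/4) (α β : ℂ)
    (h1 : α + β = 1 - (u : ℂ) / 2 + (v : ℂ) / 2)
    (h2 : α * β = (1 - (u : ℂ) + (v : ℂ) - (u : ℂ) * (v : ℂ) + (w : ℂ)) / 4) :
    ((∑' j : ℕ, z ^ (2 * j + 1) * (1 / ((2 * j + 1) * (2 * j + 1 - u))) * P u v w j : ℝ) : ℂ)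
      = (z : ℂ) / (1 - (u : ℂ)) *
                hyp3F2 α β 1 ((3 - (u : ℂ)) / 2) (3 / 2) ((z : ℂ) ^ 2) := by
  have hne : ∀ n : ℕ, (2 * (n:ℂ) + 1 - u) ≠ 0 := by
    intro n
    have : (0:ℝ) < 2 * (n:ℝ) + 1 - u := by
      have : (0:ℝ) ≤ n := by positivity
      linarith [(abs_lt.1 hu).2]
    exact_mod_cast this.ne'
  have hne' : ∀ n : ℕ, (2 * (n:ℂ) + 1) ≠ 0 := by
    intro n; exact_mod_cast (by positivity : (2 * (n:ℝ) + 1) ≠ 0)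
  have hp1 : ∀ n, poch 1 n = (n.factorial : ℂ) := by
    intro n
    induction n with
    | zero => simp [poch]
    | succ n ih =>
      rw [poch, Finset.prod_range_succ, ← poch, ih, Nat.factorial_succ]; push_cast; ring
  have key : ∀ n : ℕ, (((1 / ((2 * n + 1) * (2 * n + 1 - u))) * P u v w n : ℝ) : ℂ) =
      1 / (1 - u) * (poch α n * poch β n / (poch ((3 - (u : ℂ)) / 2) n * poch (3/2) n)) := by
    intro n
    induction n with
    | zero => simp [P, poch]
    | succ n ih =>
      have e1 : ∀ a : ℂ, poch a (n+1) = poch a n * (a + n) := fun a => by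
        simp [poch, Finset.prod_range_succ]
      have e2 : P u v w (n+1) = P u v w n * (1 + (v / (2 * n + 1) + w / ((2 * (n:ℝ) + 1) * (2 * n + 1 - u)))) := by
        simp [P, Finset.prod_range_succ]
      rw [e1, e1, e1, e1, e2]
      have a1 := hne n
      have a2 := hne' n
      have a3 := hne (n+1)
      have a4 := hne' (n+1)
      have q : (α + n) * (β + n) = ((2 * n + 1) * (2 * n + 1 - u) + v * (2 * n + 1 - u) + w) / 4 := by
        linear_combination (n:ℂ) * h1 + h2
      have r1 : (3 - (u:ℂ)) / 2 + n = (2 * ((n+1:ℕ):ℂ) + 1 - u) / 2 := by push_cast; ring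
      have r2 : (3:ℂ) / 2 + n = (2 * ((n+1:ℕ):ℂ) + 1) / 2 := by push_cast; ring
      rw [r1, r2]
      have : poch α n * (α + n) * (poch β n * (β + n)) / (poch ((3 - (u : ℂ)) / 2) n * ((2 * ((n+1:ℕ):ℂ) + 1 - u) / 2) * (poch (3/2) n * ((2 * ((n+1:ℕ):ℂ) + 1) / 2)))
        = (poch α n * poch β n / (poch ((3 - (u : ℂ)) / 2) n * poch (3/2) n)) * (((α + n) * (β + n)) / ((2 * ((n+1:ℕ):ℂ) + 1 - u) / 2 * ((2 * ((n+1:ℕ):ℂ) + 1) / 2))) := by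
        rw [div_mul_div_comm]; congr 1 <;> ring
      rw [this, ← mul_assoc (1 / (1 - (u:ℂ))), ← ih, q]
      push_cast
      push_cast at a3 a4
      field_simp
      ring
  rw [hyp3F2, ← tsum_mul_left, Complex.ofReal_tsum]
  congr 1
  ext n
  have := key n
  have hf : (n.factorial : ℂ) ≠ 0 := by exact_mod_cast n.factorial_ne_zero
  rw [mul_assoc, Complex.ofReal_mul, this, hp1, mul_comm (poch α n * poch β n), mul_assoc (n.factorial : ℂ), mul_div_mul_left _ _ hf]
  push_cast
  ring

lemma S_eq (u v w : ℝ) (N : ℕ) (l : List (ℕ × ℕ)) : S u v w N l =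
    if (∀ x ∈ l, x.2 < N) ∧ l.Pairwise (fun a b => b.2 < a.2) then
      (l.map fun x => c u v w x.1 * ((2 * (x.2:ℝ) + 1) ^ x.1)⁻¹).prod else 0 := by
  induction l generalizing N with
  | nil => simp [S]
  | cons x l ih =>
    have hiff : ((∀ y ∈ x :: l, y.2 < N) ∧ (x :: l).Pairwise (fun a b => b.2 < a.2)) ↔
        x.2 < N ∧ ((∀ y ∈ l, y.2 < x.2) ∧ l.Pairwise (fun a b => b.2 < a.2)) := by
      simp only [List.pairwise_cons, List.forall_mem_cons]
      constructor
      · rintro ⟨⟨a, b⟩, d, e⟩; exact ⟨a, d, e⟩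
      · rintro ⟨a, d, e⟩; exact ⟨⟨a, fun y hy => (d y hy).trans a⟩, d, e⟩
    simp only [S, ih, hiff, List.map_cons, List.prod_cons]
    by_cases h : x.2 < N
    · simp only [h, true_and, if_true, mul_ite, mul_zero]
    · simp only [h, false_and, if_false]

noncomputable def C (u v w : ℝ) : List ℕ → ℝ
  | [] => 0
  | (k :: K) => c u 0 1 k * (K.map (c u v w)).prod

lemma T_eq (u v w z : ℝ) (x : ℕ × ℕ) (l : List (ℕ × ℕ)) : T u v w z (x :: l) =
    C u v w ((x :: l).map Prod.fst) * if (x :: l).Pairwise (fun a b => b.2 < a.2) then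
      z ^ (2 * x.2 + 1) * ((x :: l).map fun x => ((2 * (x.2:ℝ) + 1) ^ x.1)⁻¹).prod else 0 := by
  simp only [T, S_eq, List.pairwise_cons, C, List.map_cons, List.prod_cons, List.map_map,
    List.prod_map_mul]
  split_ifs
  · simp only [Function.comp_def]; ring
  · simp

def toL (x : Σ K : List ℕ, (Fin K.length → ℕ)) : List (ℕ × ℕ) :=
  List.ofFn (fun i => (x.1.get i, x.2 i))

lemma toL_fst (x : Σ K : List ℕ, (Fin K.length → ℕ)) : (toL x).map Prod.fst = x.1 := by
  simp [toL, List.map_ofFn, Function.comp_def]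

lemma toL_bij : Function.Bijective toL := by
  constructor
  · rintro ⟨K, f⟩ ⟨K', f'⟩ h
    have h1 : K = K' := by
      have := congrArg (List.map Prod.fst) h
      simpa only [toL_fst] using this
    subst h1
    have := List.ofFn_injective h
    congr
    ext i
    exact congrArg Prod.snd (congrFun this i)
  · intro l
    refine ⟨⟨l.map Prod.fst, fun i => (l.get (i.cast (by simp))).2⟩, ?_⟩
    apply List.ext_getElem
    · simp [toL]
    · intro i h1 h2
      simp [toL]

lemma Lt_eq (K : List ℕ) (z : ℝ) (u v w : ℝ) :
    ∑' j : Fin K.length → ℕ, T u v w z (toL ⟨K, j⟩) = C u v w K * Lt K z := by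
  rcases K with _ | ⟨k, K⟩
  · simp [C, toL, T]
  · have inj : Function.Injective (fun (j : Fin (k :: K).length → ℕ) (i : Fin (k :: K).length) => 2 * j i + 1) := by
      intro a b h
      ext i
      have := congrFun h i
      simp only at this
      omega
    rw [Lt, ← tsum_mul_left]
    symm
    rw [← inj.tsum_eq]
    · congr 1
      ext j
      have hl : toL ⟨k :: K, j⟩ = (k, j ⟨0, by simp⟩) :: toL ⟨K, fun i => j i.succ⟩ := by
        simp [toL, List.ofFn_succ]
      have hC := toL_fst ⟨k :: K, j⟩
      symm
      rw [hl, T_eq, ← hl, hC]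
      congr 1
      have hP : (toL ⟨k :: K, j⟩).Pairwise (fun a b => b.2 < a.2) ↔ 
          ∀ a b : Fin (k :: K).length, a < b → j b < j a := by
        rw [toL, List.pairwise_ofFn]
      by_cases h : ∀ a b : Fin (k :: K).length, a < b → j b < j a
      · rw [if_pos (hP.2 h), dif_pos ⟨fun i => ⟨j i, rfl⟩, fun a b hab => by have := h a b hab; dsimp only; omega, by simp⟩]
        congr 1
        simp only [toL, List.map_ofFn, List.prod_ofFn]
        simp
      · rw [if_neg (fun h' => h (hP.1 h')), dif_neg]
        rintro ⟨-, h', -⟩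
        exact h fun a b hab => by have := h' a b hab; dsimp only at this; omega
    · intro m hm
      rw [Function.mem_support] at hm
      by_cases h : ∀ i, Odd (m i)
      · choose f hf using h
        exact ⟨f, funext fun i => (hf i).symm⟩
      · refine absurd ?_ hm
        rw [dif_neg (fun h' => h h'.1), mul_zero]

lemma hasSum_K (u v w z A : ℝ) (h : HasSum (T u v w z) A) :
    HasSum (fun K => C u v w K * Lt K z) A := by
  have h1 : HasSum (T u v w z ∘ toL) A := (Equiv.ofBijective _ toL_bij).hasSum_iff.2 h
  have h2 := h1.sigma (fun K => (h1.summable.sigma_factor K).hasSum)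
  convert h2 using 1
  ext K
  exact (Lt_eq K z u v w).symm

lemma prod_c (u v w : ℝ) (K : List ℕ) (h : ∀ i ∈ K, 1 ≤ i) :
    ∃ a b s : ℕ, K.sum = a + b + 2 * s ∧ K.length = b + s ∧ K.countP (fun i => decide (2 ≤ i)) = s ∧
      (K.map (c u v w)).prod = u ^ a * v ^ b * w ^ s := by
  induction K with
  | nil => exact ⟨0, 0, 0, by simp⟩
  | cons k K ih =>
    obtain ⟨a, b, s, h1, h2, h3, h4⟩ := ih (fun i hi => h i (List.mem_cons_of_mem _ hi))
    rcases k with _ | _ | k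
    · have := h 0 (by simp); omega
    · refine ⟨a, b + 1, s, ?_, ?_, ?_, ?_⟩
      · simp [h1]; ring
      · simp [h2]; ring
      · simp [h3]
      · simp [h4, c]; ring
    · refine ⟨a + k, b, s + 1, ?_, ?_, ?_, ?_⟩
      · simp [h1]; ring
      · simp [h2]; ring
      · simp [h3]
      · simp [h4, c]; ring

lemma C_adm (u v w : ℝ) (K : List ℕ) (h : Admissible K) :
    ∃ a b s : ℕ, K.sum = a + b + 2 * s + 2 ∧ K.length = b + s + 1 ∧
      K.countP (fun i => decide (2 ≤ i)) = s + 1 ∧ C u v w K = u ^ a * v ^ b * w ^ s := by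
  obtain ⟨h1, h2⟩ := h
  rcases K with _ | ⟨k, K⟩
  · simp at h2
  · rcases k with _ | _ | k
    · simp at h2
    · simp at h2
    obtain ⟨a, b, s, e1, e2, e3, e4⟩ := prod_c u v w K (fun i hi => h1 i (List.mem_cons_of_mem _ hi))
    refine ⟨a + k, b, s, ?_, ?_, ?_, ?_⟩
    · simp [e1]; ring
    · simp [e2]
    · simp [e3]
    · simp [e4, C, c]; ring

lemma C_nadm (u v w : ℝ) (K : List ℕ) (h : ¬ Admissible K) : C u v w K = 0 := by
  rcases K with _ | ⟨k, K⟩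
  · simp [C]
  · rcases k with _ | _ | k
    · simp [C, c]
    · simp [C, c]
    · have : ∃ i ∈ K, i = 0 := by
        by_contra! hh
        refine h ⟨?_, by simp⟩
        intro i hi
        rcases List.mem_cons.1 hi with rfl | hi
        · omega
        · exact Nat.pos_of_ne_zero (hh i hi)
      obtain ⟨i, hi, rfl⟩ := this
      have : (K.map (c u v w)).prod = 0 := List.prod_eq_zero (List.mem_map.2 ⟨0, hi, rfl⟩)
      simp [C, this]

def pK (K : List ℕ) : ℕ × ℕ × ℕ :=
  let n := K.length
  let s := K.countP (fun i => decide (2 ≤ i))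
  (K.sum - n - s, n - s, s - 1)

lemma hasSum_p (u v w z A : ℝ) (h : HasSum (fun K => C u v w K * Lt K z) A) :
    HasSum (fun p : ℕ × ℕ × ℕ =>
          G0hz (p.1 + p.2.1 + 2 * p.2.2 + 2) (p.2.1 + p.2.2 + 1) (p.2.2 + 1) z
            * u ^ p.1 * v ^ p.2.1 * w ^ p.2.2) A := by
  let F : (ℕ × ℕ × ℕ) × List ℕ → ℝ := fun x =>
    (if Admissible x.2 ∧ x.2.sum = x.1.1 + x.1.2.1 + 2 * x.1.2.2 + 2 ∧ x.2.length = x.1.2.1 + x.1.2.2 + 1 ∧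
        x.2.countP (fun i => decide (2 ≤ i)) = x.1.2.2 + 1 then
      Lt x.2 z
    else 0) * (u ^ x.1.1 * v ^ x.1.2.1 * w ^ x.1.2.2)
  have inj : Function.Injective (fun K : List ℕ => (pK K, K)) := fun a b hab => (Prod.ext_iff.1 hab).2
  have hF : HasSum F A := by
    refine (inj.hasSum_iff (f := F) ?_).1 ?_
    · rintro ⟨⟨a, b, s⟩, K⟩ hx
      simp only [F]
      rw [if_neg, zero_mul]
      rintro ⟨-, h1, h2, h3⟩
      refine hx ⟨K, ?_⟩
      simp only [pK, h1, h2, h3, Prod.mk.injEq, and_true]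
      omega
    · convert h using 1
      ext K
      by_cases hK : Admissible K
      · obtain ⟨a, b, s, h1, h2, h3, h4⟩ := C_adm u v w K hK
        have : pK K = (a, b, s) := by
          simp only [pK, h1, h2, h3, Prod.mk.injEq]; omega
        simp only [Function.comp, F, this]
        rw [if_pos ⟨hK, h1, h2, h3⟩, h4]; ring
      · simp only [Function.comp, F]
        rw [if_neg (fun h' => hK h'.1), C_nadm u v w K hK]; simp
  have h2 := hF.prod_fiberwise (fun p => (hF.summable.prod_factor p).hasSum)
  convert h2 using 1
  ext p
  simp only [F, tsum_mul_right, G0hz]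
  ring

end Phi

/-- Theorem 3.2: for `0 ≤ z < 1`,
`∑ G₀(k,n,s;z) u^{k-n-s} v^{n-s} w^{s-1} = (z/(1-u)) ⬝ ₃F₂(α, β, 1; (3-u)/2, 3/2; z²)`
where `α + β = 1 - u/2 + v/2` and `αβ = (1 - u + v - uv + w)/4`. -/
theorem phi0_eq_hyp3F2 :
    ∃ δ > (0 : ℝ), ∀ u v w : ℝ, |u| < δ → |v| < δ → |w| < δ →
      ∀ z : ℝ, 0 ≤ z → z < 1 →
        Summable (fun p : ℕ × ℕ × ℕ =>
          G0hz (p.1 + p.2.1 + 2 * p.2.2 + 2) (p.2.1 + p.2.2 + 1) (p.2.2 + 1) z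
            * u ^ p.1 * v ^ p.2.1 * w ^ p.2.2) ∧
        ∀ α β : ℂ, α + β = 1 - (u : ℂ) / 2 + (v : ℂ) / 2 →
          α * β = (1 - (u : ℂ) + (v : ℂ) - (u : ℂ) * (v : ℂ) + (w : ℂ)) / 4 →
          ((∑' p : ℕ × ℕ × ℕ,
              G0hz (p.1 + p.2.1 + 2 * p.2.2 + 2) (p.2.1 + p.2.2 + 1) (p.2.2 + 1) z
                * u ^ p.1 * v ^ p.2.1 * w ^ p.2.2 : ℝ) : ℂ)
            = (z : ℂ) / (1 - (u : ℂ)) *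
                hyp3F2 α β 1 ((3 - (u : ℂ)) / 2) (3 / 2) ((z : ℂ) ^ 2) := by
  refine ⟨1/4, by norm_num, ?_⟩
  intro u v w hu hv hw z hz hz1
  have h := Phi.hasSum_p u v w z _ (Phi.hasSum_K u v w z _ (Phi.hasSum_T u v w z hu hv hw hz hz1))
  refine ⟨h.summable, ?_⟩
  intro α β h1 h2
  rw [h.tsum_eq]
  exact Phi.final u v w z hu α β h1 h2
end

section
/- Fix real u, v, w with |u|, |v|, |w| sufficiently small, and for 0 < z < 1 let Φ_0^*(z) = ∑_{k ≥ n+s, n ≥ s ≥ 1} G_0^*(k,n,s;z) u^{k−n−s} v^{n−s} w^{s−1}. Then Φ_0^* satisfies the differential equation z²(1−z²)(Φ_0^*)''(z) + [(1−u)z(1−z²) − vz](Φ_0^*)'(z) + (uv−w)Φ_0^*(z) = z on (0,1). -/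
open scoped BigOperators

lemma hasSum_conv {β : Type*} {f g : β → ℝ} {a b : ℝ} (h : HasSum f a) (hf : ∀ x, g x = f x)
    (hab : b = a) : HasSum g b := by
  rw [hab, show g = f from funext hf]; exact h

/-- weight of a single (non-leading) entry -/
noncomputable def xw (u v w : ℝ) : ℕ → ℝ
  | 0 => 0
  | 1 => v
  | (k+2) => w * u ^ k

/-- weight of a leading entry -/
noncomputable def aw (u : ℝ) : ℕ → ℝ
  | 0 => 0
  | 1 => 0
  | (k+2) => u ^ k

noncomputable def Ww (u v w : ℝ) (K : List ℕ) : ℝ := (K.map (xw u v w)).prod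

noncomputable def Sw : List ℕ → ℕ → ℝ
  | [], _ => 1
  | (k :: K), i => ∑ j ∈ Finset.range i, (((2 * j + 1 : ℕ) : ℝ) ^ k)⁻¹ * Sw K (j + 1)

lemma Sw_nonneg (K : List ℕ) (i : ℕ) : 0 ≤ Sw K i := by
  induction K generalizing i with
  | nil => simp [Sw]
  | cons k K ih =>
    simp only [Sw]
    exact Finset.sum_nonneg fun j _ => mul_nonneg (by positivity) (ih _)

lemma abs_xw (u v w : ℝ) (k : ℕ) : |xw u v w k| = xw |u| |v| |w| k := by
  rcases k with _ | _ | k <;> simp [xw, abs_mul, abs_pow]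

lemma abs_aw (u : ℝ) (k : ℕ) : |aw u k| = aw |u| k := by
  rcases k with _ | _ | k <;> simp [aw, abs_pow]

lemma abs_Ww (u v w : ℝ) (K : List ℕ) : |Ww u v w K| = Ww |u| |v| |w| K := by
  induction K with
  | nil => simp [Ww]
  | cons k K ih =>
    simp only [Ww, List.map_cons, List.prod_cons, abs_mul, abs_xw] at *
    rw [ih]

lemma hasSum_aw (u m : ℝ) (hu : |u| < 1) (hm : 1 ≤ m) :
    HasSum (fun k => aw u k * (m ^ k)⁻¹) (1 / (m * (m - u))) := by
  have hm0 : 0 < m := by linarith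
  have hmu : m - u ≠ 0 := by have := (abs_lt.1 hu).2; intro h; linarith
  rw [← hasSum_nat_add_iff' 2]
  simp only [Finset.sum_range_succ, Finset.sum_range_zero, aw]
  have h1 : |u / m| < 1 := by
    rw [abs_div, abs_of_pos hm0, div_lt_one hm0]; linarith
  have := (hasSum_geometric_of_abs_lt_one h1).mul_left ((m ^ 2)⁻¹)
  have hne : 1 - u / m ≠ 0 := by
    rw [one_sub_div hm0.ne']; exact div_ne_zero hmu hm0.ne'
  refine hasSum_conv this (fun k => ?_) ?_
  · rw [div_pow, pow_add]; field_simp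
  · rw [one_sub_div hm0.ne']; field_simp; ring

lemma hasSum_xw (u v w m : ℝ) (hu : |u| < 1) (hm : 1 ≤ m) :
    HasSum (fun k => xw u v w k * (m ^ k)⁻¹) (v / m + w * (1 / (m * (m - u)))) := by
  have h1 := (hasSum_aw u m hu hm).mul_left w
  have h2 := hasSum_ite_eq (1 : ℕ) (v / m)
  refine hasSum_conv (h2.add h1) (fun k => ?_) rfl
  rcases k with _ | _ | k
  · simp [xw, aw]
  · simp [xw, aw, div_eq_mul_inv]
  · simp [xw, aw, mul_assoc]

lemma F_bound (u v w m : ℝ) (hu : |u| < 1/8) (hv : |v| < 1/8) (hw : |w| < 1/8) (hm : 1 ≤ m) :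
    |v| / m + |w| * (1 / (m * (m - |u|))) ≤ 1 / 2 / m := by
  have hm0 : 0 < m := by linarith
  have hmu : 1/2 ≤ m - |u| := by linarith
  have : |w| * (1 / (m * (m - |u|))) ≤ (1/4) / m := by
    rw [mul_one_div, div_le_div_iff₀ (by positivity) hm0]
    nlinarith [abs_nonneg w]
  have : |v| / m ≤ (1/8) / m := by gcongr
  have : 1/2/m = (1/8)/m + (1/4)/m + (1/8)/m := by ring
  have : 0 ≤ (1/8)/m := by positivity
  linarith

lemma xw_nonneg (u v w : ℝ) (k : ℕ) : 0 ≤ xw |u| |v| |w| k := by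
  rw [← abs_xw]; exact abs_nonneg _

lemma Ww_nonneg (u v w : ℝ) (K) : 0 ≤ Ww |u| |v| |w| K := by
  rw [← abs_Ww]; exact abs_nonneg _

lemma finset_bound (u v w : ℝ) (hu : |u| < 1/8) (hv : |v| < 1/8) (hw : |w| < 1/8) (N : ℕ) :
    ∀ s : Finset (List ℕ), (∀ K ∈ s, K.length ≤ N) → ∀ i : ℕ,
      ∑ K ∈ s, Ww |u| |v| |w| K * Sw K i ≤ i + 1 := by
  induction N with
  | zero =>
    intro s hs i
    have : s ⊆ {[]} := by
      intro K hK
      simpa using hs K hK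
    calc _ ≤ ∑ K ∈ {[]}, Ww |u| |v| |w| K * Sw K i :=
          Finset.sum_le_sum_of_subset_of_nonneg this
            fun K _ _ => mul_nonneg (Ww_nonneg _ _ _ _) (Sw_nonneg _ _)
      _ ≤ _ := by simp [Ww, Sw]
  | succ N ih =>
    intro s hs i
    let A : Finset ℕ := s.image List.headI
    let B : Finset (List ℕ) := (s.image List.tail)
    have hB : ∀ K ∈ B, K.length ≤ N := by
      intro K hK
      obtain ⟨L, hL, rfl⟩ := Finset.mem_image.1 hK
      have := hs L hL
      simp; omega
    have hsub : s ⊆ insert [] ((A ×ˢ B).image fun p => p.1 :: p.2) := by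
      intro K hK
      rcases K with _ | ⟨k, K⟩
      · simp
      · refine Finset.mem_insert_of_mem (Finset.mem_image.2 ⟨(k, K), ?_, rfl⟩)
        exact Finset.mem_product.2 ⟨Finset.mem_image.2 ⟨_, hK, rfl⟩, Finset.mem_image.2 ⟨_, hK, rfl⟩⟩
    calc _ ≤ ∑ K ∈ insert [] ((A ×ˢ B).image fun p => p.1 :: p.2), Ww |u| |v| |w| K * Sw K i :=
          Finset.sum_le_sum_of_subset_of_nonneg hsub
            fun K _ _ => mul_nonneg (Ww_nonneg _ _ _ _) (Sw_nonneg _ _)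
      _ = 1 + ∑ p ∈ A ×ˢ B, Ww |u| |v| |w| (p.1 :: p.2) * Sw (p.1 :: p.2) i := by
          rw [Finset.sum_insert (by simp), Finset.sum_image]
          · simp [Ww, Sw]
          · rintro ⟨a, b⟩ _ ⟨c, d⟩ _ h
            simpa using h
      _ = 1 + ∑ j ∈ Finset.range i,
            (∑ k ∈ A, xw |u| |v| |w| k * (((2 * j + 1 : ℕ) : ℝ) ^ k)⁻¹) *
            (∑ K ∈ B, Ww |u| |v| |w| K * Sw K (j + 1)) := by
          congr 1
          simp_rw [Sw, Finset.mul_sum]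
          rw [Finset.sum_comm]
          refine Finset.sum_congr rfl fun j _ => ?_
          rw [Finset.sum_product, ← Finset.mul_sum, Finset.sum_mul_sum]
          refine Finset.sum_congr rfl fun k _ => Finset.sum_congr rfl fun K _ => ?_
          simp only [Ww, List.map_cons, List.prod_cons]; ring
      _ ≤ 1 + ∑ j ∈ Finset.range i, (1 : ℝ) := by
          gcongr with j hj
          have hm : (1:ℝ) ≤ ((2 * j + 1 : ℕ) : ℝ) := by push_cast; linarith [(Nat.cast_nonneg j : (0:ℝ) ≤ j)]
          have h1 : ∑ k ∈ A, xw |u| |v| |w| k * (((2 * j + 1 : ℕ) : ℝ) ^ k)⁻¹ ≤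
              1 / 2 / ((2 * j + 1 : ℕ) : ℝ) := by
            refine le_trans (?_ : _ ≤ (_ : ℝ)) (F_bound u v w _ hu hv hw hm)
            have hX := hasSum_xw |u| |v| |w| _ (by rw [abs_abs]; linarith) hm
            exact sum_le_hasSum A (fun k _ => mul_nonneg (xw_nonneg _ _ _ _) (by positivity)) hX
          have h2 := ih B hB (j + 1)
          calc _ ≤ 1 / 2 / ((2 * j + 1 : ℕ) : ℝ) * (((j + 1 : ℕ) : ℝ) + 1) := by
                gcongr
                exact Finset.sum_nonneg fun K _ => mul_nonneg (Ww_nonneg _ _ _ _) (Sw_nonneg _ _)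
            _ ≤ 1 := by
                rw [div_mul_eq_mul_div, div_le_one (by positivity)]
                push_cast
                linarith [(Nat.cast_nonneg j : (0:ℝ) ≤ j)]
      _ = _ := by simp; ring

lemma summable_abs_WS (u v w : ℝ) (hu : |u| < 1/8) (hv : |v| < 1/8) (hw : |w| < 1/8) (i : ℕ) :
    Summable (fun K => Ww |u| |v| |w| K * Sw K i) ∧
    ∑' K, Ww |u| |v| |w| K * Sw K i ≤ i + 1 := by
  have hb : ∀ s : Finset (List ℕ), ∑ K ∈ s, Ww |u| |v| |w| K * Sw K i ≤ i + 1 := fun s =>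
    finset_bound u v w hu hv hw (s.sup List.length) s (fun K hK => Finset.le_sup hK) i
  exact ⟨summable_of_sum_le (fun K => mul_nonneg (Ww_nonneg _ _ _ _) (Sw_nonneg _ _)) hb,
    Real.tsum_le_of_sum_le (fun K => mul_nonneg (Ww_nonneg _ _ _ _) (Sw_nonneg _ _)) hb⟩

lemma summable_WS (u v w : ℝ) (hu : |u| < 1/8) (hv : |v| < 1/8) (hw : |w| < 1/8) (i : ℕ) :
    Summable (fun K => Ww u v w K * Sw K i) := by
  refine Summable.of_abs ?_
  simpa only [abs_mul, abs_Ww, abs_of_nonneg (Sw_nonneg _ _)] using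
    (summable_abs_WS u v w hu hv hw i).1

noncomputable def Tw (u v w : ℝ) (i : ℕ) : ℝ := ∑' K, Ww u v w K * Sw K i

lemma Tw_bound (u v w : ℝ) (hu : |u| < 1/8) (hv : |v| < 1/8) (hw : |w| < 1/8) (i : ℕ) :
    |Tw u v w i| ≤ i + 1 := by
  have h := summable_abs_WS u v w hu hv hw i
  have e : ∀ K, ‖Ww u v w K * Sw K i‖ = Ww |u| |v| |w| K * Sw K i := fun K => by
    rw [Real.norm_eq_abs, abs_mul, abs_Ww, abs_of_nonneg (Sw_nonneg _ _)]
  have := norm_tsum_le_tsum_norm (f := fun K => Ww u v w K * Sw K i) (by simpa only [e] using h.1)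
  simp only [e] at this
  exact this.trans h.2

lemma cons_inj : Function.Injective (fun p : ℕ × List ℕ => p.1 :: p.2) := by
  rintro ⟨a, b⟩ ⟨c, d⟩ h
  simpa using h

lemma hasSum_list {f : List ℕ → ℝ} {a : ℝ} (h0 : f [] = 0)
    (h : HasSum (fun p : ℕ × List ℕ => f (p.1 :: p.2)) a) : HasSum f a := by
  refine (cons_inj.hasSum_iff ?_).1 h
  intro K hK
  rcases K with _ | ⟨k, K⟩
  · exact h0
  · exact absurd ⟨(k, K), rfl⟩ hK

lemma Tw_zero (u v w : ℝ) : Tw u v w 0 = 1 := by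
  unfold Tw
  rw [tsum_eq_single []]
  · simp [Ww, Sw]
  · intro K hK
    rcases K with _ | ⟨k, K⟩
    · exact absurd rfl hK
    · simp [Sw]

lemma Tw_succ (u v w : ℝ) (hu : |u| < 1/8) (hv : |v| < 1/8) (hw : |w| < 1/8) (i : ℕ) :
    Tw u v w (i + 1) - Tw u v w i =
      (v / ((2 * i + 1 : ℕ) : ℝ) + w * (1 / (((2 * i + 1 : ℕ) : ℝ) * (((2 * i + 1 : ℕ) : ℝ) - u))))
        * Tw u v w (i + 1) := by
  have hm : (1:ℝ) ≤ ((2 * i + 1 : ℕ) : ℝ) := by push_cast; linarith [(Nat.cast_nonneg i : (0:ℝ) ≤ i)]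
  have h1 := (summable_WS u v w hu hv hw (i+1)).hasSum.sub (summable_WS u v w hu hv hw i).hasSum
  refine h1.unique (hasSum_list (by simp [Sw]) ?_)
  have hx := hasSum_xw u v w _ (by linarith : |u| < 1) hm
  have hT := (summable_WS u v w hu hv hw (i+1)).hasSum
  have hs := summable_mul_of_summable_norm hx.summable.norm hT.summable.norm
  have := hx.mul hT hs
  refine hasSum_conv this (fun p => ?_) rfl
  simp only [Sw, Ww, List.map_cons, List.prod_cons, Finset.sum_range_succ]
  ring

lemma gen_sum (k : ℕ) (K : List ℕ)
    (hK : ∀ b : ℕ, ∑' m : Fin K.length → ℕ, ENNReal.ofReal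
      (if (∀ i, Odd (m i)) ∧ (∀ i j : Fin K.length, i < j → m j ≤ m i) ∧ (∀ i, m i < 2 * b) then
        ∏ i, ((m i : ℝ) ^ K.get i)⁻¹ else 0) = ENNReal.ofReal (Sw K b))
    (φ : ℕ → ℝ) (hφ : ∀ n, 0 ≤ φ n) :
    ∑' m : Fin (K.length + 1) → ℕ, ENNReal.ofReal
      (if (∀ i, Odd (m i)) ∧ (∀ i j : Fin (K.length + 1), i < j → m j ≤ m i) then
        φ (m 0) * ∏ i, ((m i : ℝ) ^ (k :: K).get i)⁻¹ else 0) =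
    ∑' j : ℕ, ENNReal.ofReal
      (φ (2 * j + 1) * ((((2 * j + 1 : ℕ) : ℝ) ^ k)⁻¹ * Sw K (j + 1))) := by
  rw [← (Fin.consEquiv (fun _ : Fin (K.length + 1) => ℕ)).tsum_eq, ENNReal.summable.tsum_prod' (fun _ => ENNReal.summable)]
  have inj : Function.Injective (fun j : ℕ => 2 * j + 1) := fun a b h => by
    simp only at h; omega
  rw [← inj.tsum_eq]
  · refine tsum_congr fun j => ?_
    rw [← mul_assoc, ENNReal.ofReal_mul (mul_nonneg (hφ _) (by positivity)), ← hK (j + 1),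
      ← ENNReal.tsum_mul_left]
    refine tsum_congr fun m => ?_
    rw [← ENNReal.ofReal_mul (mul_nonneg (hφ _) (by positivity))]
    congr 1
    have hc : ((∀ i, Odd ((Fin.consEquiv (fun _ : Fin (K.length + 1) => ℕ)) (2 * j + 1, m) i)) ∧
        (∀ i l : Fin (K.length + 1), i < l →
          (Fin.consEquiv (fun _ : Fin (K.length + 1) => ℕ)) (2 * j + 1, m) l ≤
          (Fin.consEquiv (fun _ : Fin (K.length + 1) => ℕ)) (2 * j + 1, m) i)) ↔
        ((∀ i, Odd (m i)) ∧ (∀ i j : Fin K.length, i < j → m j ≤ m i) ∧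
          (∀ i, m i < 2 * (j + 1))) := by
      simp only [Fin.consEquiv_apply, Fin.forall_fin_succ, Fin.cons_zero, Fin.cons_succ,
        Fin.succ_lt_succ_iff, Fin.succ_pos, Fin.not_lt_zero, forall_true_left,
        false_imp_iff, true_and]
      constructor
      · rintro ⟨⟨_, h1⟩, h2, h3⟩
        exact ⟨h1, h3, fun i => by have := h2 i; omega⟩
      · rintro ⟨h1, h2, h3⟩
        exact ⟨⟨⟨j, rfl⟩, h1⟩, fun i => by have := h3 i; omega, h2⟩
    rw [if_congr hc rfl rfl, mul_ite, mul_zero]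
    congr 1
    rw [Fin.prod_univ_succ, ← mul_assoc]
    rfl
  · intro n hn
    by_contra hno
    apply hn
    rw [ENNReal.tsum_eq_zero]
    intro m
    rw [if_neg, ENNReal.ofReal_zero]
    rintro ⟨h, _⟩
    obtain ⟨a, ha⟩ := h 0
    exact hno ⟨a, ha.symm⟩

lemma Sw_sum (K : List ℕ) (b : ℕ) : ∑' m : Fin K.length → ℕ, ENNReal.ofReal
      (if (∀ i, Odd (m i)) ∧ (∀ i j : Fin K.length, i < j → m j ≤ m i) ∧ (∀ i, m i < 2 * b) then
        ∏ i, ((m i : ℝ) ^ K.get i)⁻¹ else 0) = ENNReal.ofReal (Sw K b) := by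
  induction K generalizing b with
  | nil =>
    rw [tsum_eq_single (fun i => i.elim0)]
    · simp [Sw]
    · intro m hm
      exact absurd (funext fun i => i.elim0) hm
  | cons k K ih =>
    have h := gen_sum k K ih (fun n => if n < 2 * b then 1 else 0)
      (fun n => by split_ifs <;> norm_num)
    refine Eq.trans ?_ (h.trans ?_)
    · refine tsum_congr fun m => ?_
      congr 1
      by_cases h0 : m 0 < 2 * b
      · rw [if_pos h0, one_mul]
        refine if_congr ?_ rfl rfl
        constructor
        · rintro ⟨h1, h2, h3⟩; exact ⟨h1, h2⟩
        · rintro ⟨h1, h2⟩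
          refine ⟨h1, h2, fun i => ?_⟩
          by_cases hi : i = 0
          · rw [hi]; exact h0
          · exact lt_of_le_of_lt (h2 0 i (Fin.pos_of_ne_zero hi)) h0
      · rw [if_neg h0, zero_mul, ite_self, if_neg]
        rintro ⟨_, _, h3⟩
        exact h0 (h3 0)
    · rw [tsum_eq_sum (s := Finset.range b)]
      · rw [Sw, ENNReal.ofReal_sum_of_nonneg
          (fun j _ => mul_nonneg (by positivity) (Sw_nonneg _ _))]
        refine Finset.sum_congr rfl fun j hj => ?_
        have := Finset.mem_range.1 hj
        rw [if_pos (by omega), one_mul]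
      · intro j hj
        have := Finset.mem_range.not.1 hj
        rw [if_neg (by omega), zero_mul, ENNReal.ofReal_zero]

lemma LtStar_cons (k : ℕ) (K : List ℕ) (z : ℝ) (hz : 0 ≤ z) :
    LtStar (k :: K) z =
      ∑' j : ℕ, z ^ (2 * j + 1) * ((((2 * j + 1 : ℕ) : ℝ) ^ k)⁻¹ * Sw K (j + 1)) := by
  have h := gen_sum k K (Sw_sum K) (fun n => z ^ n) (fun n => by positivity)
  have h' := congrArg ENNReal.toReal h
  rw [ENNReal.tsum_toReal_eq (fun _ => ENNReal.ofReal_ne_top),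
    ENNReal.tsum_toReal_eq (fun _ => ENNReal.ofReal_ne_top)] at h'
  refine Eq.trans ?_ (h'.trans ?_)
  · unfold LtStar
    refine tsum_congr fun m => ?_
    rw [ENNReal.toReal_ofReal]
    · by_cases hc : (∀ i : Fin (K.length + 1), Odd (m i)) ∧ (∀ i j : Fin (K.length + 1), i < j → m j ≤ m i)
      · rw [dif_pos ⟨hc.1, hc.2, by simp⟩, if_pos hc]
        rfl
      · rw [dif_neg (fun h => hc ⟨h.1, h.2.1⟩), if_neg hc]
    · split_ifs
      · exact mul_nonneg (by positivity) (Finset.prod_nonneg fun i _ => by positivity)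
      · exact le_rfl
  · refine tsum_congr fun j => ENNReal.toReal_ofReal ?_
    exact mul_nonneg (by positivity) (mul_nonneg (by positivity) (Sw_nonneg _ _))

noncomputable def ac (u v w : ℝ) (i : ℕ) : ℝ :=
  1 / (((2 * i + 1 : ℕ) : ℝ) * (((2 * i + 1 : ℕ) : ℝ) - u)) * Tw u v w (i + 1)

lemma one_le_odd (i : ℕ) : (1:ℝ) ≤ ((2 * i + 1 : ℕ) : ℝ) := by
  push_cast; linarith [(Nat.cast_nonneg i : (0:ℝ) ≤ i)]

lemma g_bound (u : ℝ) (hu : |u| < 1/8) (i : ℕ) :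
    |1 / (((2 * i + 1 : ℕ) : ℝ) * (((2 * i + 1 : ℕ) : ℝ) - u))| ≤ 2 := by
  have hm := one_le_odd i
  have := abs_lt.1 hu
  rw [abs_of_nonneg (by apply div_nonneg zero_le_one; apply mul_nonneg <;> linarith),
    div_le_iff₀ (by apply mul_pos <;> linarith)]
  nlinarith

lemma ac_bound (u v w : ℝ) (hu : |u| < 1/8) (hv : |v| < 1/8) (hw : |w| < 1/8) (i : ℕ) :
    |ac u v w i| ≤ 2 * ((i:ℝ) + 2) := by
  unfold ac
  rw [abs_mul]
  have h1 := g_bound u hu i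
  have h2 := Tw_bound u v w hu hv hw (i + 1)
  push_cast at h2 h1 ⊢
  calc _ ≤ 2 * ((i:ℝ) + 1 + 1) := by gcongr
    _ = _ := by ring

lemma summable_poly (r : ℝ) (hr0 : 0 ≤ r) (hr : r < 1) (d : ℕ) :
    Summable (fun i : ℕ => ((i:ℝ) + 2) ^ d * r ^ i) := by
  by_cases h : r = 0
  · subst h
    refine summable_of_ne_finset_zero (s := {0}) fun i hi => ?_
    have : i ≠ 0 := by simpa using hi
    simp [this]
  have h1 := (summable_nat_add_iff 2).2
    (summable_pow_mul_geometric_of_norm_lt_one d (r := r) (by rwa [Real.norm_eq_abs, abs_of_nonneg hr0]))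
  have h2 := h1.mul_left ((r ^ 2)⁻¹)
  refine h2.congr fun i => ?_
  push_cast
  rw [pow_add]
  field_simp

lemma summable_sq (z : ℝ) (hz0 : 0 ≤ z) (hz : z < 1) (d : ℕ) :
    Summable (fun i : ℕ => ((i:ℝ) + 2) ^ d * z ^ (2 * i)) := by
  refine (summable_poly (z ^ 2) (by positivity) (by nlinarith) d).congr fun i => ?_
  rw [pow_mul]

noncomputable def hh (u v w z : ℝ) (p : ℕ × ℕ × List ℕ) : ℝ :=
  z ^ (2 * p.1 + 1) * ((aw u p.2.1 * (((2 * p.1 + 1 : ℕ) : ℝ) ^ p.2.1)⁻¹) *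
    (Ww u v w p.2.2 * Sw p.2.2 (p.1 + 1)))

lemma hh_fiber (u v w z : ℝ) (hu : |u| < 1/8) (hv : |v| < 1/8) (hw : |w| < 1/8) (i : ℕ) :
    HasSum (fun q => hh u v w z (i, q)) (z ^ (2 * i + 1) * ac u v w i) := by
  have h1 := hasSum_aw u _ (by linarith : |u| < 1) (one_le_odd i)
  have h2 := (summable_WS u v w hu hv hw (i+1)).hasSum
  have hs := summable_mul_of_summable_norm h1.summable.norm h2.summable.norm
  exact (h1.mul h2 hs).mul_left (z ^ (2 * i + 1))

lemma hh_summable (u v w z : ℝ) (hu : |u| < 1/8) (hv : |v| < 1/8) (hw : |w| < 1/8)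
    (hz0 : 0 ≤ z) (hz : z < 1) : Summable (hh u v w z) := by
  refine Summable.of_abs ?_
  have e : ∀ p, |hh u v w z p| = hh |u| |v| |w| z p := by
    intro p
    unfold hh
    rw [abs_mul, abs_mul, abs_mul, abs_mul, abs_aw, abs_Ww, abs_of_nonneg (Sw_nonneg _ _),
      abs_of_nonneg (by positivity : 0 ≤ z ^ (2 * p.1 + 1)),
      abs_of_nonneg (by positivity : 0 ≤ (((2 * p.1 + 1 : ℕ) : ℝ) ^ p.2.1)⁻¹)]
  have hu' : |(|u|)| < 1/8 := by rwa [abs_abs]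
  have hv' : |(|v|)| < 1/8 := by rwa [abs_abs]
  have hw' : |(|w|)| < 1/8 := by rwa [abs_abs]
  simp only [e]
  rw [summable_prod_of_nonneg (fun p => by rw [← e]; exact abs_nonneg _)]
  refine ⟨fun i => (hh_fiber _ _ _ z hu' hv' hw' i).summable, ?_⟩
  simp only [fun i => (hh_fiber _ _ _ z hu' hv' hw' i).tsum_eq]
  refine Summable.of_abs ?_
  refine Summable.of_nonneg_of_le (fun _ => abs_nonneg _) (fun i => ?_)
    ((summable_sq z hz0 hz 1).mul_left 2)
  rw [abs_mul, abs_of_nonneg (by positivity : 0 ≤ z ^ (2 * i + 1)), pow_succ]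
  have := ac_bound |u| |v| |w| hu' hv' hw' i
  have hp : 0 ≤ z ^ (2 * i) := by positivity
  calc z ^ (2 * i) * z * |ac |u| |v| |w| i| ≤ z ^ (2 * i) * 1 * (2 * ((i:ℝ) + 2)) := by gcongr
    _ = _ := by ring

noncomputable def gl (u v w z : ℝ) : List ℕ → ℝ
  | [] => 0
  | (k :: K) => aw u k * Ww u v w K * LtStar (k :: K) z

lemma gl_hasSum (u v w z : ℝ) (hu : |u| < 1/8) (hv : |v| < 1/8) (hw : |w| < 1/8)
    (hz0 : 0 ≤ z) (hz : z < 1) :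
    HasSum (gl u v w z) (∑' i, ac u v w i * z ^ (2 * i + 1)) := by
  have hs := hh_summable u v w z hu hv hw hz0 hz
  refine hasSum_list rfl ?_
  have h1 : HasSum (hh u v w z) (∑' i, ac u v w i * z ^ (2 * i + 1)) := by
    have h2 := hs.hasSum.prod_fiberwise (hh_fiber u v w z hu hv hw)
    have h3 := hs.hasSum
    rw [← h2.tsum_eq] at h3
    simpa only [mul_comm] using h3
  have h4 : HasSum (fun p : (ℕ × List ℕ) × ℕ => hh u v w z p.swap) _ :=
    (Equiv.prodComm _ _).hasSum_iff.2 h1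
  refine h4.prod_fiberwise fun q => ?_
  have h5 : Summable (fun i => hh u v w z (i, q)) := h4.summable.prod_factor q
  have h6 := h5.hasSum
  refine hasSum_conv h6 (fun _ => rfl) ?_
  simp only [gl]
  rw [LtStar_cons _ _ _ hz0, ← tsum_mul_left]
  refine tsum_congr fun i => ?_
  simp only [hh]
  ring

def pw (K : List ℕ) : ℕ × ℕ × ℕ :=
  (K.sum - K.length - K.countP (fun i => decide (2 ≤ i)),
   K.length - K.countP (fun i => decide (2 ≤ i)), K.countP (fun i => decide (2 ≤ i)) - 1)

lemma wt_len (K : List ℕ) (h : ∀ i ∈ K, 1 ≤ i) :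
    K.length + K.countP (fun i => decide (2 ≤ i)) ≤ K.sum ∧
    K.countP (fun i => decide (2 ≤ i)) ≤ K.length := by
  refine ⟨?_, List.countP_le_length⟩
  induction K with
  | nil => simp
  | cons k K ih =>
    have h1 := h k (by simp)
    have h2 := ih fun i hi => h i (by simp [hi])
    simp only [List.length_cons, List.countP_cons, List.sum_cons, decide_eq_true_eq]
    split_ifs <;> omega

lemma Ww_eq (u v w : ℝ) (K : List ℕ) (h : ∀ i ∈ K, 1 ≤ i) :
    Ww u v w K = u ^ (K.sum - K.length - K.countP (fun i => decide (2 ≤ i))) *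
      v ^ (K.length - K.countP (fun i => decide (2 ≤ i))) *
      w ^ (K.countP (fun i => decide (2 ≤ i))) := by
  induction K with
  | nil => simp [Ww]
  | cons k K ih =>
    have h1 := h k (by simp)
    have h0 : ∀ i ∈ K, 1 ≤ i := fun i hi => h i (by simp [hi])
    have h2 := ih h0
    obtain ⟨h3, h4⟩ := wt_len K h0
    have h5 : Ww u v w (k :: K) = xw u v w k * Ww u v w K := by simp [Ww]
    rw [h5, h2]
    simp only [List.length_cons, List.countP_cons, List.sum_cons, decide_eq_true_eq]
    generalize K.countP (fun i => decide (2 ≤ i)) = c at *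
    generalize K.length = l at *
    generalize K.sum = s at *
    rcases k with _ | _ | k
    · omega
    · simp only [xw]
      rw [if_neg (by omega), show 0 + 1 + s - (l + 1) - (c + 0) = s - l - c by omega,
        show l + 1 - (c + 0) = (l - c) + 1 by omega, pow_succ]
      simp only [add_zero]; ring
    · simp only [xw]
      rw [if_pos (by omega), show k + 1 + 1 + s - (l + 1) - (c + 1) = k + (s - l - c) by omega,
        show l + 1 - (c + 1) = l - c by omega, pow_succ, pow_add]
      ring

lemma Ww_zero (u v w : ℝ) (K : List ℕ) (h : ¬ ∀ i ∈ K, 1 ≤ i) : Ww u v w K = 0 := by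
  push Not at h
  obtain ⟨i, hi, h0⟩ := h
  have : i = 0 := by omega
  subst this
  exact List.prod_eq_zero (List.mem_map.2 ⟨0, hi, rfl⟩)

lemma gl_eq (u v w z : ℝ) (K : List ℕ) :
    gl u v w z K = if Admissible K then
      LtStar K z * (u ^ (pw K).1 * v ^ (pw K).2.1 * w ^ (pw K).2.2) else 0 := by
  rcases K with _ | ⟨k, K⟩
  · simp [gl, Admissible]
  by_cases hK : ∀ i ∈ K, 1 ≤ i
  · by_cases hk : 2 ≤ k
    · rw [if_pos ⟨by simpa using ⟨by omega, hK⟩, hk⟩]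
      obtain ⟨h3, h4⟩ := wt_len K hK
      simp only [gl, pw, Ww_eq u v w K hK, List.length_cons, List.countP_cons, List.sum_cons,
        decide_eq_true_eq, if_pos hk]
      generalize K.countP (fun i => decide (2 ≤ i)) = c at *
      generalize K.length = l at *
      generalize K.sum = s at *
      obtain ⟨k, rfl⟩ := Nat.exists_eq_add_of_le' hk
      rw [show k + 2 + s - (l + 1) - (c + 1) = k + (s - l - c) by omega,
        show l + 1 - (c + 1) = l - c by omega, show c + 1 - 1 = c by omega, pow_add]
      simp only [aw]
      ring
    · rw [if_neg (fun h => hk h.2)]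
      have : aw u k = 0 := by
        rcases k with _ | _ | k
        · rfl
        · rfl
        · omega
      simp [gl, this]
  · rw [if_neg (fun h => hK fun i hi => h.1 i (by simp [hi]))]
    simp [gl, Ww_zero u v w K hK]

lemma pw_iff (K : List ℕ) (hK : Admissible K) (p : ℕ × ℕ × ℕ) :
    pw K = p ↔ (K.sum = p.1 + p.2.1 + 2 * p.2.2 + 2 ∧ K.length = p.2.1 + p.2.2 + 1 ∧
        K.countP (fun i => decide (2 ≤ i)) = p.2.2 + 1) := by
  obtain ⟨h1, h2⟩ := wt_len K hK.1
  have h3 : 1 ≤ K.countP (fun i => decide (2 ≤ i)) := by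
    rcases K with _ | ⟨k, K⟩
    · simp [Admissible] at hK
    · have : 2 ≤ k := hK.2
      simp [List.countP_cons, this]
  obtain ⟨a, b, c⟩ := p
  simp only [pw, Prod.mk.injEq]
  omega

lemma Phi_eq (u v w z : ℝ) (hu : |u| < 1/8) (hv : |v| < 1/8) (hw : |w| < 1/8)
    (hz0 : 0 ≤ z) (hz : z < 1) :
    ∑' p : ℕ × ℕ × ℕ,
          G0hzStar (p.1 + p.2.1 + 2 * p.2.2 + 2) (p.2.1 + p.2.2 + 1) (p.2.2 + 1) z
            * u ^ p.1 * v ^ p.2.1 * w ^ p.2.2 = ∑' i, ac u v w i * z ^ (2 * i + 1) := by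
  classical
  have h := (gl_hasSum u v w z hu hv hw hz0 hz).tsum_fiberwise pw
  rw [← h.tsum_eq]
  refine tsum_congr fun p => ?_
  rw [tsum_subtype (pw ⁻¹' {p}) (gl u v w z), mul_assoc, mul_assoc, G0hzStar, ← tsum_mul_right]
  refine tsum_congr fun K => ?_
  rw [Set.indicator_apply, gl_eq]
  by_cases hK : Admissible K
  · by_cases hp : pw K = p
    · rw [if_pos ⟨hK, (pw_iff K hK p).1 hp⟩, if_pos (by exact hp), if_pos hK, hp]
      ring
    · rw [if_neg (fun h => hp ((pw_iff K hK p).2 h.2)), if_neg (by exact hp), zero_mul]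
  · rw [if_neg (fun h => hK h.1), if_neg hK, ite_self, zero_mul]

lemma deriv_series (b : ℕ → ℝ) (e : ℕ → ℕ) (C : ℝ) (d : ℕ) (hC : 0 ≤ C)
    (hb : ∀ i, |b i| ≤ C * ((i:ℝ) + 2) ^ d)
    (he1 : ∀ i, i ≤ e i - 1) (he : ∀ i, e i ≤ 2 * (i + 2)) (hei : ∀ i, i ≤ e i) (z : ℝ)
    (hz0 : 0 < z) (hz : z < 1) :
    HasDerivAt (fun x => ∑' i, b i * x ^ e i) (∑' i : ℕ, b i * (e i : ℝ) * z ^ (e i - 1)) z ∧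
    Summable (fun i => b i * z ^ e i) := by
  obtain ⟨r, hr1, hr2⟩ := exists_between hz
  have hr0 : 0 < r := hz0.trans hr1
  have hS : ∀ y : ℝ, 0 < y → y < 1 → Summable (fun i => b i * y ^ e i) := by
    intro y hy0 hy1
    refine Summable.of_abs (Summable.of_nonneg_of_le (fun _ => abs_nonneg _) (fun i => ?_)
      ((summable_poly y hy0.le hy1 d).mul_left C))
    rw [abs_mul, abs_of_nonneg (by positivity : 0 ≤ y ^ e i), ← mul_assoc]
    have h1 : y ^ e i ≤ y ^ i := pow_le_pow_of_le_one hy0.le hy1.le (hei i)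
    have h2 := hb i
    gcongr
  refine ⟨?_, hS z hz0 hz⟩
  refine hasDerivAt_tsum_of_isPreconnected (t := Set.Ioo 0 r) (y₀ := z)
    (g := fun (i : ℕ) (x : ℝ) => b i * x ^ e i) (g' := fun (i : ℕ) (x : ℝ) => b i * e i * x ^ (e i - 1))
    (u := fun i : ℕ => C * 2 * (((i:ℝ) + 2) ^ (d + 1) * r ^ i))
    ((summable_poly r hr0.le hr2 (d + 1)).mul_left (C * 2)) isOpen_Ioo isPreconnected_Ioo
    ?_ ?_ ⟨hz0, hr1⟩ (hS z hz0 hz) ⟨hz0, hr1⟩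
  · intro i y _
    have := (hasDerivAt_pow (e i) y).const_mul (b i)
    rwa [← mul_assoc] at this
  · intro i y hy
    rw [Real.norm_eq_abs, abs_mul, abs_mul,
      abs_of_nonneg (pow_nonneg hy.1.le _ : 0 ≤ y ^ (e i - 1)), Nat.abs_cast]
    have h1 : y ^ (e i - 1) ≤ r ^ i :=
      (pow_le_pow_left₀ hy.1.le hy.2.le _).trans (pow_le_pow_of_le_one hr0.le hr2.le (he1 i))
    have h2 := hb i
    have h3 : (e i : ℝ) ≤ 2 * ((i:ℝ) + 2) := by exact_mod_cast he i
    have h4 : 0 ≤ y ^ (e i - 1) := pow_nonneg hy.1.le _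
    calc |b i| * (e i : ℝ) * y ^ (e i - 1)
        ≤ (C * ((i:ℝ) + 2) ^ d) * (2 * ((i:ℝ) + 2)) * r ^ i := by gcongr
      _ = _ := by ring

lemma ac_rec (u v w : ℝ) (hu : |u| < 1/8) (hv : |v| < 1/8) (hw : |w| < 1/8) (i : ℕ) :
    ac u v w i * ((((2 * i + 1 : ℕ) : ℝ) - u) * (((2 * i + 1 : ℕ) : ℝ) - v) - w) = Tw u v w i := by
  have h := Tw_succ u v w hu hv hw i
  have hm := one_le_odd i
  unfold ac
  generalize ((2 * i + 1 : ℕ) : ℝ) = m at *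
  have h0 : m ≠ 0 := by linarith
  have h1 : m - u ≠ 0 := by have := abs_lt.1 hu; intro h; linarith
  generalize Tw u v w (i + 1) = T at *
  generalize Tw u v w i = T' at *
  have : T' = T - (v / m + w * (1 / (m * (m - u)))) * T := by linarith
  rw [this]
  field_simp
  ring

lemma ac_succ (u v w : ℝ) (hu : |u| < 1/8) (i : ℕ) :
    Tw u v w (i + 1) = ac u v w i * (((2 * i + 1 : ℕ) : ℝ) * (((2 * i + 1 : ℕ) : ℝ) - u)) := by
  have hm := one_le_odd i
  unfold ac
  generalize ((2 * i + 1 : ℕ) : ℝ) = m at *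
  have h0 : m ≠ 0 := by linarith
  have h1 : m - u ≠ 0 := by have := abs_lt.1 hu; intro h; linarith
  field_simp

/-- The generating function `Φ₀*(z)` of the sums `G₀*(k,n,s;z)` of one-variable star
multiple polylogarithms satisfies the differential equation
`z²(1-z²)(Φ₀*)'' + [(1-u)z(1-z²) - vz](Φ₀*)' + (uv-w)Φ₀* = z` on `(0,1)` (Proposition 3.3). -/
theorem phi0_star_differential_equation :
    ∃ δ > (0 : ℝ), ∀ u v w : ℝ, |u| < δ → |v| < δ → |w| < δ →
      ∀ z ∈ Set.Ioo (0 : ℝ) 1,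
        (fun Φ₀s : ℝ → ℝ =>
          z ^ 2 * (1 - z ^ 2) * deriv (deriv Φ₀s) z
            + ((1 - u) * z * (1 - z ^ 2) - v * z) * deriv Φ₀s z
            + (u * v - w) * Φ₀s z = z)
        (fun z : ℝ => ∑' p : ℕ × ℕ × ℕ,
          G0hzStar (p.1 + p.2.1 + 2 * p.2.2 + 2) (p.2.1 + p.2.2 + 1) (p.2.2 + 1) z
            * u ^ p.1 * v ^ p.2.1 * w ^ p.2.2) := by
  refine ⟨1/8, by norm_num, ?_⟩
  intro u v w hu hv hw z hz
  dsimp only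
  set Φ : ℝ → ℝ := fun z : ℝ => ∑' p : ℕ × ℕ × ℕ,
          G0hzStar (p.1 + p.2.1 + 2 * p.2.2 + 2) (p.2.1 + p.2.2 + 1) (p.2.2 + 1) z
            * u ^ p.1 * v ^ p.2.1 * w ^ p.2.2 with hΦ
  let a := ac u v w
  have ha : ∀ i, |a i| ≤ 2 * ((i:ℝ) + 2) ^ 1 := fun i => by
    rw [pow_one]; exact ac_bound u v w hu hv hw i
  have hb : ∀ i : ℕ, |a i * ((2 * i + 1 : ℕ) : ℝ)| ≤ 4 * ((i:ℝ) + 2) ^ 2 := fun i => by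
    rw [abs_mul, Nat.abs_cast]
    have h1 := ha i
    have h2 : ((2 * i + 1 : ℕ) : ℝ) ≤ 2 * ((i:ℝ) + 2) := by push_cast; linarith
    calc _ ≤ (2 * ((i:ℝ) + 2) ^ 1) * (2 * ((i:ℝ) + 2)) := by gcongr
      _ = _ := by ring
  have hc : ∀ i : ℕ, |a i * ((2 * i + 1 : ℕ) : ℝ) * ((2 * i : ℕ) : ℝ)| ≤ 8 * ((i:ℝ) + 2) ^ 3 :=
    fun i => by
    rw [abs_mul, Nat.abs_cast]
    have h1 := hb i
    have h2 : ((2 * i : ℕ) : ℝ) ≤ 2 * ((i:ℝ) + 2) := by push_cast; linarith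
    calc _ ≤ (4 * ((i:ℝ) + 2) ^ 2) * (2 * ((i:ℝ) + 2)) := by gcongr
      _ = _ := by ring
  have D1 := fun x (hx : x ∈ Set.Ioo (0:ℝ) 1) => deriv_series a (fun i => 2 * i + 1) 2 1
    (by norm_num) ha (fun i => by omega) (fun i => by omega) (fun i => by omega) x hx.1 hx.2
  have D2 := fun x (hx : x ∈ Set.Ioo (0:ℝ) 1) => deriv_series
    (fun i => a i * ((2 * i + 1 : ℕ) : ℝ)) (fun i => 2 * i) 4 2
    (by norm_num) hb (fun i => by omega) (fun i => by omega) (fun i => by omega) x hx.1 hx.2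
  have S3 := (deriv_series (fun i => a i * ((2 * i + 1 : ℕ) : ℝ) * ((2 * i : ℕ) : ℝ))
    (fun i => 2 * i + 1) 8 3
    (by norm_num) hc (fun i => by omega) (fun i => by omega) (fun i => by omega) z hz.1 hz.2).2
  have S1 := (D1 z hz).2
  have S2 := (D2 z hz).2
  have hmem : Set.Ioo (0:ℝ) 1 ∈ nhds z := isOpen_Ioo.mem_nhds hz
  have E0 : ∀ x ∈ Set.Ioo (0:ℝ) 1, Φ x = ∑' i, a i * x ^ (2 * i + 1) := fun x hx =>
    Phi_eq u v w x hu hv hw hx.1.le hx.2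
  have E1 : ∀ x ∈ Set.Ioo (0:ℝ) 1,
      deriv Φ x = ∑' i, a i * ((2 * i + 1 : ℕ) : ℝ) * x ^ (2 * i) := fun x hx => by
    have : Φ =ᶠ[nhds x] fun x => ∑' i, a i * x ^ (2 * i + 1) :=
      Filter.eventuallyEq_of_mem (isOpen_Ioo.mem_nhds hx) E0
    rw [this.deriv_eq, (D1 x hx).1.deriv]
    rfl
  have E2 : deriv (deriv Φ) z =
      ∑' i, a i * ((2 * i + 1 : ℕ) : ℝ) * ((2 * i : ℕ) : ℝ) * z ^ (2 * i - 1) := by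
    have : deriv Φ =ᶠ[nhds z] fun x => ∑' i, a i * ((2 * i + 1 : ℕ) : ℝ) * x ^ (2 * i) :=
      Filter.eventuallyEq_of_mem hmem E1
    rw [this.deriv_eq, (D2 z hz).1.deriv]
  have H0 : HasSum (fun i => a i * z ^ (2 * i + 1)) (Φ z) := by
    rw [E0 z hz]; exact S1.hasSum
  have H1 : HasSum (fun i => a i * ((2 * i + 1 : ℕ) : ℝ) * z ^ (2 * i + 1)) (z * deriv Φ z) := by
    rw [E1 z hz]
    exact hasSum_conv (S2.hasSum.mul_left z) (fun i => by ring) rfl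
  have H2 : HasSum (fun i => a i * ((2 * i + 1 : ℕ) : ℝ) * ((2 * i : ℕ) : ℝ) * z ^ (2 * i + 1))
      (z ^ 2 * deriv (deriv Φ) z) := by
    rw [E2, ← tsum_mul_left]
    refine hasSum_conv S3.hasSum (fun _ => rfl) (tsum_congr fun i => ?_)
    rcases i with _ | i
    · simp
    · rw [show 2 * (i + 1) - 1 = 2 * i + 1 by omega]; ring
  have HA : HasSum (fun i => Tw u v w i * z ^ (2 * i + 1))
      (z ^ 2 * deriv (deriv Φ) z + (1 - u - v) * (z * deriv Φ z) + (u * v - w) * Φ z) := by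
    refine hasSum_conv ((H2.add (H1.mul_left (1 - u - v))).add (H0.mul_left (u * v - w)))
      (fun i => ?_) rfl
    rw [← ac_rec u v w hu hv hw i]
    push_cast
    ring
  have HB : HasSum (fun i => Tw u v w (i + 1) * z ^ (2 * (i + 1) + 1))
      (z ^ 2 * (z ^ 2 * deriv (deriv Φ) z + (1 - u) * (z * deriv Φ z))) := by
    refine hasSum_conv ((H2.add (H1.mul_left (1 - u))).mul_left (z ^ 2)) (fun i => ?_) rfl
    rw [ac_succ u v w hu i]
    push_cast
    ring
  have HC := ((hasSum_nat_add_iff' 1).2 HA).unique HB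
  simp only [Finset.sum_range_one, Tw_zero] at HC
  linear_combination HC
end
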